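/- arXiv:math/0401246 — 2 statements merged into one kernel-verified Lean document; each statement's English description precedes it below -/
import Mathlib

section
/- (Kaplansky's 7th conjecture) Let k be an algebraically closed field and H a finite-dimensional Hopf algebra over k that is semisimple as a ring and whose antipode S satisfies tr(S²) ≠ 0 (equivalently, H is also cosemisimple). Then S² = id, i.e. S ∘ S is the identity linear map of H. -/
/-!
In characteristic zero the theorem follows from a computation with traces (Larson–Radford), and
characteristic `p` is reduced to characteristic zero by lifting `H` to the Witt vectors of `k`
(Etingof–Gelaki).

**Characteristic zero.** Let `H` be finite free of rank `d` over a domain of characteristic zero,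
with a normalised integral and `tr(S²) ≠ 0`. The functional `φ(a) = tr(x ↦ a S²(x))` is an integral
of the dual with `φ(1) ≠ 0`. Such an integral is two-sided and the pairing `φ(ab)` is
nondegenerate, and the twisted trace property of `φ` gives `S⁴ = 1`. Let `χ` be the character of
the regular representation and `E(a) = χ(a₁) a₂`. Then `E² = dE` and `tr(S²E) = tr(S²)`. As `S²` is
an involution commuting with the idempotent `E/d`, the number `tr(S²)/d` is an integer; it is
nonzero and of absolute value at most `1`, whence `S² = ± 1`, and the sign is `+` since `S²(1) = 1`.

**Characteristic `p`.** The algebra `H` is a product of matrix algebras over `k`, so it lifts to the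
same product `A` over the Witt vectors of `k`, which has a separability idempotent. The
comultiplication is lifted to `A` modulo successive powers of `p`. The defect of multiplicativity is
a Hochschild 2-cocycle, hence a coboundary, and can be removed. The defect of coassociativity is
then an inner derivation, say by `ψ`; the pentagon identity makes `ψ` a 3-cocycle of the cobar
complex of `H` up to centralisers, and integration over the first tensor factor contracts that
complex, so that an infinitesimal conjugation removes the defect. The counit and the antipode lift
because a map which is invertible modulo `p` is invertible. The trace of `S²` on `A` reduces to that
on `H`, hence is nonzero; so `S² = 1` on `A`, and therefore on `H`.
-/

namespace KaplanskySeventh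

open TensorProduct Coalgebra HopfAlgebra WithConv

/-! ### The square of the antipode -/

section Antipode

variable {R H : Type*} [CommRing R] [Ring H] [HopfAlgebra R H]

variable (R H) in
/-- The map `a ↦ a ⊗ 1`, as a linear map. -/
noncomputable abbrev tensorInl : H →ₗ[R] H ⊗[R] H :=
  (Algebra.TensorProduct.includeLeft : H →ₐ[R] H ⊗[R] H).toLinearMap

variable (R H) in
/-- The map `a ↦ 1 ⊗ a`, as a linear map. -/
noncomputable abbrev tensorInr : H →ₗ[R] H ⊗[R] H :=
  (Algebra.TensorProduct.includeRight : H →ₐ[R] H ⊗[R] H).toLinearMap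

theorem tensorInl_convMul_tensorInr :
    toConv (tensorInl R H) * toConv (tensorInr R H) = toConv comul := by
  ext a
  simp [← (ℛ R a).eq, LinearMap.convMul_apply]

theorem algHom_comp_antipode_convMul {A : Type*} [Ring A] [Algebra R A] (f : H →ₐ[R] A) :
    toConv (f.toLinearMap ∘ₗ antipode R) * toConv f.toLinearMap = 1 := by
  have h := LinearMap.algHom_comp_convMul_distrib f (toConv (antipode R (A := H))) (toConv .id)
  rw [LinearMap.antipode_mul_id] at h
  ext a
  simpa using congr($h.symm a)

theorem algHom_convMul_comp_antipode {A : Type*} [Ring A] [Algebra R A] (f : H →ₐ[R] A) :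
    toConv f.toLinearMap * toConv (f.toLinearMap ∘ₗ antipode R) = 1 := by
  have h := LinearMap.algHom_comp_convMul_distrib f (toConv .id) (toConv (antipode R (A := H)))
  rw [LinearMap.id_mul_antipode] at h
  ext a
  simpa using congr($h.symm a)

theorem comul_antipode (a : H) :
    comul (R := R) (antipode R a) =
      map (antipode R) (antipode R) (TensorProduct.comm R H H (comul a)) := by
  have hprod : toConv (tensorInr R H ∘ₗ antipode R) * toConv (tensorInl R H ∘ₗ antipode R) =
      toConv (map (antipode R) (antipode R) ∘ₗ (TensorProduct.comm R H H).toLinearMap ∘ₗ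
        comul) := by
    ext a
    simp [← (ℛ R a).eq, LinearMap.convMul_apply]
  have hleft : toConv (tensorInr R H ∘ₗ antipode R) * toConv (tensorInl R H ∘ₗ antipode R) *
      toConv (comul (R := R)) = 1 := by
    rw [← tensorInl_convMul_tensorInr, mul_assoc, ← mul_assoc (toConv (tensorInl R H ∘ₗ _)),
      algHom_comp_antipode_convMul, one_mul, algHom_comp_antipode_convMul]
  rw [hprod] at hleft
  exact congr(($(left_inv_eq_right_inv hleft LinearMap.comul_right_inv)).ofConv a).symm

variable (R H) in
/-- The square `S²` of the antipode, as a linear map. -/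
noncomputable def antipodeSq : H →ₗ[R] H := antipode R ∘ₗ antipode R

theorem antipodeSq_apply (a : H) : antipodeSq R H a = antipode R (antipode R a) := rfl

@[simp] theorem antipodeSq_mul (a b : H) :
    antipodeSq R H (a * b) = antipodeSq R H a * antipodeSq R H b := by
  simp [antipodeSq, antipode_mul_antidistrib]

@[simp] theorem antipodeSq_one : antipodeSq R H 1 = 1 := by simp [antipodeSq]

@[simp] theorem comul_antipodeSq (a : H) :
    comul (R := R) (antipodeSq R H a) = map (antipodeSq R H) (antipodeSq R H) (comul a) := by
  simp [antipodeSq, comul_antipode, ← (ℛ R a).eq]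

end Antipode

section PartialTrace

variable {R M N N' : Type*} [CommRing R] [AddCommGroup M] [Module R M] [AddCommGroup N] [Module R N]
  [AddCommGroup N'] [Module R N']

/-- Contraction of the first tensor factor against a functional: `m ⊗ n ↦ p(m) n`. -/
noncomputable def contractFst (p : M →ₗ[R] R) : M ⊗[R] N →ₗ[R] N :=
  (TensorProduct.lid R N).toLinearMap ∘ₗ p.rTensor N

/-- Contraction of the second tensor factor against a functional: `m ⊗ n ↦ p(n) m`. -/
noncomputable def contractSnd (p : N →ₗ[R] R) : M ⊗[R] N →ₗ[R] M :=
  (TensorProduct.rid R M).toLinearMap ∘ₗ p.lTensor M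

@[simp] theorem contractFst_tmul (p : M →ₗ[R] R) (m : M) (n : N) :
    contractFst p (m ⊗ₜ[R] n) = p m • n := by
  simp [contractFst]

@[simp] theorem contractSnd_tmul (p : N →ₗ[R] R) (m : M) (n : N) :
    contractSnd p (m ⊗ₜ[R] n) = p n • m := by
  simp [contractSnd]

variable {ι : Type*} [Fintype ι] (b : Module.Basis ι R M)

theorem sum_contractSnd_coord_tmul (t : N ⊗[R] M) :
    ∑ i, contractSnd (b.coord i) t ⊗ₜ[R] b i = t := by
  have h : ∑ i, (TensorProduct.mk R N M).flip (b i) ∘ₗ contractSnd (b.coord i) = .id := by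
    ext n m
    simp [← tmul_smul, ← tmul_sum, b.sum_repr]
  simpa using congr($h t)

theorem trace_eq_sum_coord (f : M →ₗ[R] M) :
    LinearMap.trace R M f = ∑ i, b.coord i (f (b i)) := by
  classical
  simp [LinearMap.trace_eq_matrix_trace R b, Matrix.trace, LinearMap.toMatrix_apply]

/-- The partial trace of a map `M → N ⊗ M` over `M`, computed in a basis of `M`. -/
noncomputable def partialTrace (f : M →ₗ[R] N ⊗[R] M) : N := ∑ i, contractSnd (b.coord i) (f (b i))

theorem partialTrace_tmul (f : M →ₗ[R] M) (n : N) :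
    partialTrace b (TensorProduct.mk R N M n ∘ₗ f) = LinearMap.trace R M f • n := by
  simp [partialTrace, trace_eq_sum_coord b, Finset.sum_smul]

theorem partialTrace_comp (P Q : M →ₗ[R] N ⊗[R] M) (μ : N ⊗[R] N →ₗ[R] N') :
    partialTrace b (μ.rTensor M ∘ₗ (TensorProduct.assoc R N N M).symm.toLinearMap ∘ₗ
      Q.lTensor N ∘ₗ P) =
    ∑ i, ∑ j, μ (contractSnd (b.coord j) (P (b i)) ⊗ₜ contractSnd (b.coord i) (Q (b j))) := by
  have hslide (i : ι) (n : N) (t : N ⊗[R] M) :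
      contractSnd (b.coord i) (μ.rTensor M ((TensorProduct.assoc R N N M).symm (n ⊗ₜ t))) =
        μ (n ⊗ₜ contractSnd (b.coord i) t) := by
    have h : contractSnd (b.coord i) ∘ₗ μ.rTensor M ∘ₗ
        (TensorProduct.assoc R N N M).symm.toLinearMap ∘ₗ TensorProduct.mk R N (N ⊗[R] M) n =
        μ ∘ₗ TensorProduct.mk R N N n ∘ₗ contractSnd (b.coord i) := by
      ext; simp
    exact congr($h t)
  refine Finset.sum_congr rfl fun i _ ↦ ?_
  conv_lhs => rw [LinearMap.comp_apply, LinearMap.comp_apply, LinearMap.comp_apply,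
    ← sum_contractSnd_coord_tmul b (P (b i))]
  simp [hslide]

theorem partialTrace_comp_comm (P Q : M →ₗ[R] N ⊗[R] M) (μ : N ⊗[R] N →ₗ[R] N') :
    partialTrace b (μ.rTensor M ∘ₗ (TensorProduct.assoc R N N M).symm.toLinearMap ∘ₗ
      Q.lTensor N ∘ₗ P) =
    partialTrace b ((μ ∘ₗ (TensorProduct.comm R N N).toLinearMap).rTensor M ∘ₗ
      (TensorProduct.assoc R N N M).symm.toLinearMap ∘ₗ P.lTensor N ∘ₗ Q) := by
  rw [partialTrace_comp, partialTrace_comp, Finset.sum_comm]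
  simp

end PartialTrace

/-! ### The twisted trace -/

section Integral

variable {R H : Type*} [CommRing R] [Ring H] [HopfAlgebra R H]

variable (R H) in
/-- The functional `a ↦ tr (x ↦ a S²(x))` on `H`. -/
noncomputable def twistedTrace : H →ₗ[R] R :=
  LinearMap.trace R H ∘ₗ LinearMap.lcomp R H (antipodeSq R H) ∘ₗ LinearMap.mul R H

theorem twistedTrace_apply (a : H) :
    twistedTrace R H a = LinearMap.trace R H (LinearMap.mulLeft R a ∘ₗ antipodeSq R H) := rfl

theorem twistedTrace_one :
    twistedTrace R H 1 = LinearMap.trace R H (antipodeSq R H) := by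
  simp [twistedTrace_apply]

theorem twistedTrace_mul (a b : H) :
    twistedTrace R H (a * b) = twistedTrace R H (b * antipodeSq R H a) := by
  rw [twistedTrace_apply, twistedTrace_apply, ← Module.End.mul_eq_comp, LinearMap.mulLeft_mul,
    ← Module.End.mul_eq_comp, mul_assoc, LinearMap.trace_mul_comm]
  congr 1
  ext x
  simp [mul_assoc]

theorem rTensor_antipode_comul (a : H) : (antipode R).rTensor H (comul a) =
    (toConv (tensorInl R H ∘ₗ antipode R) * toConv (tensorInr R H)) a := by
  simp [← (ℛ R a).eq, LinearMap.convMul_apply]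

theorem sum_mul_rTensor_antipode_comul {a : H} {ι : Type*} (r : Coalgebra.Repr R a ι) :
    ∑ i ∈ r.index, (r.left i ⊗ₜ[R] (1 : H)) * (antipode R).rTensor H (comul (r.right i)) =
      1 ⊗ₜ a := by
  have h : toConv (tensorInl R H) * (toConv (tensorInl R H ∘ₗ antipode R) *
      toConv (tensorInr R H)) = toConv (tensorInr R H) := by
    rw [← mul_assoc, algHom_convMul_comp_antipode, one_mul]
  simpa [← r.eq, LinearMap.convMul_apply (_ : WithConv (H →ₗ[R] H ⊗[R] H)),
    rTensor_antipode_comul] using congr($h a)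

theorem sum_comul_mul_antipode {a : H} {ι : Type*} (r : Coalgebra.Repr R a ι) :
    ∑ i ∈ r.index, comul (R := R) (r.left i) * ((1 : H) ⊗ₜ antipode R (r.right i)) = a ⊗ₜ 1 := by
  have h : toConv comul * toConv (tensorInr R H ∘ₗ antipode R) = toConv (tensorInl R H) := by
    rw [← tensorInl_convMul_tensorInr, mul_assoc, algHom_convMul_comp_antipode, mul_one]
  simpa [← r.eq, LinearMap.convMul_apply (_ : WithConv (H →ₗ[R] H ⊗[R] H))] using congr($h a)

theorem sum_comul_antipodeSq_mul_antipode {a : H} {ι : Type*} (r : Coalgebra.Repr R a ι) :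
    ∑ i ∈ r.index, comul (R := R) (antipodeSq R H (r.right i)) *
      (antipode R (r.left i) ⊗ₜ[R] (1 : H)) = 1 ⊗ₜ antipodeSq R H a := by
  have h := congr(map (antipode R) (antipodeSq R H) $(sum_mul_rTensor_antipode_comul r))
  simp_rw [map_tmul, antipode_one] at h
  rw [← h, map_sum]
  refine Finset.sum_congr rfl fun i _ ↦ ?_
  rw [comul_antipodeSq]
  simp [← (ℛ R (r.right i)).eq, Finset.mul_sum, Finset.sum_mul, antipode_mul_antidistrib,
    antipodeSq_apply]

theorem rTensor_mul'_assoc_symm_tmul (x : H) (t : H ⊗[R] H) :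
    (LinearMap.mul' R H).rTensor H ((TensorProduct.assoc R H H H).symm (x ⊗ₜ t)) =
      (x ⊗ₜ 1) * t := by
  induction t <;> simp_all [tmul_add, mul_add]

theorem rTensor_mul'_comm_assoc_symm_tmul (x : H) (t : H ⊗[R] H) :
    (LinearMap.mul' R H ∘ₗ (TensorProduct.comm R H H).toLinearMap).rTensor H
      ((TensorProduct.assoc R H H H).symm (x ⊗ₜ t)) = t * (x ⊗ₜ 1) := by
  induction t <;> simp_all [tmul_add, add_mul]

theorem partialTrace_mulLeft_one_tmul {ι : Type*} [Fintype ι] (b : Module.Basis ι R H)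
    (t : H ⊗[R] H) :
    partialTrace b (LinearMap.mulLeft R t ∘ₗ TensorProduct.mk R H H 1 ∘ₗ antipodeSq R H) =
      contractSnd (twistedTrace R H) t := by
  induction t with
  | zero => simp [partialTrace]
  | add s t hs ht => simpa [partialTrace, add_mul, Finset.sum_add_distrib] using congr($hs + $ht)
  | tmul u v =>
    have h : LinearMap.mulLeft R (u ⊗ₜ[R] v) ∘ₗ TensorProduct.mk R H H 1 ∘ₗ antipodeSq R H =
        TensorProduct.mk R H H u ∘ₗ LinearMap.mulLeft R v ∘ₗ antipodeSq R H := by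
      ext; simp
    rw [h, partialTrace_tmul, contractSnd_tmul, twistedTrace_apply]

theorem contractSnd_twistedTrace_comul [Module.Free R H] [Module.Finite R H] (a : H) :
    contractSnd (twistedTrace R H) (comul a) = twistedTrace R H a • 1 := by
  let b := Module.Free.chooseBasis R H
  let P : H →ₗ[R] H ⊗[R] H := comul ∘ₗ LinearMap.mulLeft R a ∘ₗ antipodeSq R H
  let Q : H →ₗ[R] H ⊗[R] H := (antipode R).rTensor H ∘ₗ comul
  have hPQ : (LinearMap.mul' R H).rTensor H ∘ₗ (TensorProduct.assoc R H H H).symm.toLinearMap ∘ₗ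
      Q.lTensor H ∘ₗ P =
      TensorProduct.mk R H H 1 ∘ₗ LinearMap.mulLeft R a ∘ₗ antipodeSq R H := by
    ext x
    generalize hy : LinearMap.mulLeft R a (antipodeSq R H x) = y
    simp [P, ← (ℛ R y).eq, Q, hy, rTensor_mul'_assoc_symm_tmul, sum_mul_rTensor_antipode_comul]
  have hQP : (LinearMap.mul' R H ∘ₗ (TensorProduct.comm R H H).toLinearMap).rTensor H ∘ₗ
      (TensorProduct.assoc R H H H).symm.toLinearMap ∘ₗ P.lTensor H ∘ₗ Q =
      LinearMap.mulLeft R (comul a) ∘ₗ TensorProduct.mk R H H 1 ∘ₗ antipodeSq R H := by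
    ext x
    have h := sum_comul_antipodeSq_mul_antipode (ℛ R x)
    simp_rw [comul_antipodeSq] at h
    simp [P, Q, ← (ℛ R x).eq, rTensor_mul'_comm_assoc_symm_tmul, ← h, mul_assoc]
  rw [← partialTrace_mulLeft_one_tmul b, ← hQP, ← partialTrace_comp_comm, hPQ, partialTrace_tmul,
    twistedTrace_apply]

end Integral

section NormalizedIntegral

variable {R H : Type*} [CommRing R] [Ring H] [HopfAlgebra R H]

variable (R) in
/-- A right integral of a bialgebra with counit `1`: the witness of semisimplicity used to expand
traces. -/
structure IsNormalizedIntegral {H : Type*} [Ring H] [Bialgebra R H] (Λ : H) : Prop where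
  mul_eq_smul (a : H) : Λ * a = counit (R := R) a • Λ
  counit_eq_one : counit (R := R) Λ = 1

theorem IsNormalizedIntegral.comul_mul_tmul_one {Λ : H} (hΛ : IsNormalizedIntegral R Λ) (a : H) :
    comul Λ * (a ⊗ₜ[R] 1) = comul Λ * (1 ⊗ₜ antipode R a) := by
  rw [← sum_comul_mul_antipode (ℛ R a), Finset.mul_sum]
  simp_rw [← mul_assoc, ← Bialgebra.comul_mul, hΛ.mul_eq_smul, map_smul, smul_mul_assoc]
  conv_rhs => rw [← sum_counit_smul (ℛ R a)]
  simp [tmul_sum, Finset.mul_sum]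

variable [Module.Free R H] [Module.Finite R H]

namespace IsNormalizedIntegral

variable {Λ : H} (hΛ : IsNormalizedIntegral R Λ)

include hΛ

theorem twistedTrace_eq_one : twistedTrace R H Λ = 1 := by
  rw [twistedTrace_apply, ← hΛ.counit_eq_one, ← LinearMap.trace_smulRight (counit (R := R)) Λ]
  congr 1
  ext x
  simp [hΛ.mul_eq_smul, antipodeSq]

theorem trace_mulLeft_eq_one : LinearMap.trace R H (LinearMap.mulLeft R Λ) = 1 := by
  rw [← hΛ.counit_eq_one, ← LinearMap.trace_smulRight (counit (R := R)) Λ]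
  congr 1
  ext x
  simp [hΛ.mul_eq_smul]

theorem contractSnd_comul_mul_antipode (a : H) :
    contractSnd (twistedTrace R H) (comul Λ * (1 ⊗ₜ antipode R a)) = a := by
  have hmul (t : H ⊗[R] H) : contractSnd (twistedTrace R H) (t * (a ⊗ₜ 1)) =
      contractSnd (twistedTrace R H) t * a := by
    induction t <;> simp_all [add_mul]
  rw [← hΛ.comul_mul_tmul_one, hmul, contractSnd_twistedTrace_comul, hΛ.twistedTrace_eq_one,
    one_smul, one_mul]

theorem antipode_injective : Function.Injective (antipode R (A := H)) := fun a b h ↦ by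
  rw [← hΛ.contractSnd_comul_mul_antipode a, h, hΛ.contractSnd_comul_mul_antipode]

theorem contractFst_twistedTrace_antipode_comul (a : H) :
    contractFst (twistedTrace R H ∘ₗ antipode R) (comul a) =
      twistedTrace R H (antipode R a) • 1 := by
  apply hΛ.antipode_injective (R := R)
  rw [map_smul, antipode_one, ← contractSnd_twistedTrace_comul, comul_antipode]
  simp [← (ℛ R a).eq]

theorem trace_eq_twistedTrace (T : H →ₗ[R] H) : LinearMap.trace R H T =
    twistedTrace R H (LinearMap.mul' R H (map .id (antipode R ∘ₗ T)
      (TensorProduct.comm R H H (comul Λ)))) := by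
  have hT : T = ∑ i ∈ (ℛ R Λ).index, (twistedTrace R H ∘ₗ LinearMap.mulLeft R ((ℛ R Λ).right i) ∘ₗ
      antipode R).smulRight (T ((ℛ R Λ).left i)) := by
    ext a
    conv_lhs => rw [← hΛ.contractSnd_comul_mul_antipode a, ← (ℛ R Λ).eq]
    simp [Finset.sum_mul]
  conv_lhs => rw [hT, map_sum]
  simp [← (ℛ R Λ).eq]

section Domain

variable [IsDomain R] (htr : LinearMap.trace R H (antipodeSq R H) ≠ 0)

include htr

theorem twistedTrace_comp_antipode : twistedTrace R H ∘ₗ antipode R = twistedTrace R H := by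
  ext a
  have h : twistedTrace R H (contractFst (twistedTrace R H ∘ₗ antipode R) (comul a)) =
      twistedTrace R H (antipode R (contractSnd (twistedTrace R H) (comul a))) := by
    simp [← (ℛ R a).eq, mul_comm]
  rw [hΛ.contractFst_twistedTrace_antipode_comul, contractSnd_twistedTrace_comul] at h
  simp only [map_smul, antipode_one, twistedTrace_one, smul_eq_mul] at h
  exact mul_right_cancel₀ htr h

theorem twistedTrace_antipode (a : H) : twistedTrace R H (antipode R a) = twistedTrace R H a :=
  congr($(hΛ.twistedTrace_comp_antipode htr) a)

theorem contractFst_twistedTrace_comul (a : H) :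
    contractFst (twistedTrace R H) (comul a) = twistedTrace R H a • 1 := by
  have h := hΛ.contractFst_twistedTrace_antipode_comul a
  rwa [hΛ.twistedTrace_comp_antipode htr, hΛ.twistedTrace_antipode htr] at h

theorem antipodeSq_antipodeSq (b : H) : antipodeSq R H (antipodeSq R H b) = b := by
  have hrot (x y : H) : twistedTrace R H (x * y) = twistedTrace R H (antipodeSq R H y * x) := by
    rw [← hΛ.twistedTrace_antipode htr, antipode_mul_antidistrib, twistedTrace_mul,
      ← hΛ.twistedTrace_antipode htr (_ * x), antipode_mul_antidistrib]
    rfl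
  have hcomm (t : H ⊗[R] H) :
      contractSnd (twistedTrace R H) (t * (1 ⊗ₜ antipode R (antipodeSq R H (antipodeSq R H b)))) =
        contractSnd (twistedTrace R H) (t * (1 ⊗ₜ antipode R b)) := by
    induction t with
    | zero => simp
    | add s t hs ht => simp [add_mul, hs, ht]
    | tmul x y =>
      have h := (hrot y (antipode R b)).trans (twistedTrace_mul _ _)
      simpa [antipodeSq_apply] using congr($h.symm • x)
  rw [← hΛ.contractSnd_comul_mul_antipode (antipodeSq R H (antipodeSq R H b)), hcomm,
    hΛ.contractSnd_comul_mul_antipode]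

theorem trace_contractFst_lTensor_antipodeSq_comul (p : H →ₗ[R] R) :
    LinearMap.trace R H (contractFst p ∘ₗ (antipodeSq R H).lTensor H ∘ₗ comul) =
      p Λ * LinearMap.trace R H (antipodeSq R H) := by
  have hrot (v w : H) : twistedTrace R H (w * antipode R (antipodeSq R H v)) =
      twistedTrace R H (antipode R v * w) := by
    rw [twistedTrace_mul, ← hΛ.twistedTrace_antipode htr (_ * w),
      ← hΛ.twistedTrace_antipode htr (antipode R (_ * w))]
    simp [antipode_mul_antidistrib, antipodeSq_apply]
  let g : H ⊗[R] (H ⊗[R] H) →ₗ[R] R := LinearMap.mul' R R ∘ₗ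
    map p (twistedTrace R H ∘ₗ LinearMap.mul' R H ∘ₗ (antipode R).rTensor H)
  have hg : twistedTrace R H (LinearMap.mul' R H (map .id (antipode R ∘ₗ contractFst p ∘ₗ
      (antipodeSq R H).lTensor H ∘ₗ comul) (TensorProduct.comm R H H (comul Λ)))) =
      g (TensorProduct.assoc R H H H (comul.rTensor H (comul Λ))) := by
    rw [← (ℛ R Λ).eq]
    simp [← (ℛ R ((ℛ R Λ).left _)).eq, g, hrot, sum_tmul, Finset.mul_sum]
  rw [trace_eq_twistedTrace hΛ, hg, coassoc_apply]
  have hcounit : ∑ i ∈ (ℛ R Λ).index, p ((ℛ R Λ).left i) * counit ((ℛ R Λ).right i) = p Λ := by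
    simpa only [map_sum, LinearMap.rTensor_tmul, LinearMap.mul'_apply, mul_one] using
      congr(LinearMap.mul' R R (p.rTensor R $(sum_tmul_counit_eq (ℛ R Λ))))
  conv_lhs => rw [← (ℛ R Λ).eq]
  simp [g, twistedTrace_one, Algebra.algebraMap_eq_smul_one, ← hcounit, Finset.sum_mul, mul_assoc]

end Domain

end IsNormalizedIntegral

end NormalizedIntegral

/-! ### The theorem in characteristic zero -/

section Involution

section Field

variable {K V : Type*} [Field K] [CharZero K] [AddCommGroup V] [Module K V] [FiniteDimensional K V]

theorem exists_trace_eq_natCast_sub_and_trace_sq_eq {f : Module.End K V} (hf : f * f * f = f) :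
    ∃ m n : ℕ, LinearMap.trace K V f = m - n ∧ LinearMap.trace K V (f * f) = m + n := by
  have hidem (g : Module.End K V) (hg : g * (f * f) = g) (hgg : g * g = f * f) :
      IsIdempotentElem ((2⁻¹ : K) • (f * f + g)) := by
    have : (f * f + g) * (f * f + g) = (2 : K) • (f * f + g) := by
      have h : f * f * g = g := by rw [← hgg, mul_assoc, hgg, hg]
      rw [add_mul, mul_add, mul_add, h, hg, hgg, ← mul_assoc, hf, two_smul]
      abel
    rw [IsIdempotentElem, smul_mul_smul, this, smul_smul]
    norm_num
  have hpos := hidem f (by rw [← mul_assoc, hf]) rfl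
  have hneg := hidem (-f) (by rw [neg_mul, ← mul_assoc, hf]) (by simp)
  have htrpos := (LinearMap.IsIdempotentElem.isProj_range _ hpos).trace
  have htrneg := (LinearMap.IsIdempotentElem.isProj_range _ hneg).trace
  refine ⟨Module.finrank K (LinearMap.range ((2⁻¹ : K) • (f * f + f))),
    Module.finrank K (LinearMap.range ((2⁻¹ : K) • (f * f + -f))), ?_, ?_⟩
  · rw [← htrpos, ← htrneg, ← map_sub, ← smul_sub]
    simp [← two_smul K f, smul_smul]
  · rw [← htrpos, ← htrneg, ← map_add, ← smul_add]
    simp only [map_smul, map_add, map_neg, smul_eq_mul]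
    ring

theorem eq_one_of_mul_self_eq_one_of_trace_eq_finrank {σ : Module.End K V} (hσ : σ * σ = 1)
    (htr : LinearMap.trace K V σ = Module.finrank K V) : σ = 1 := by
  have hidem : IsIdempotentElem ((2⁻¹ : K) • (1 - σ)) := by
    have : (1 - σ) * (1 - σ) = (2 : K) • (1 - σ) := by
      rw [mul_sub, sub_mul, sub_mul, hσ, two_smul]
      simp only [mul_one, one_mul]
      abel
    rw [IsIdempotentElem, smul_mul_smul, this, smul_smul]
    norm_num
  have hzero := LinearMap.IsIdempotentElem.eq_zero_of_trace_eq_zero hidem (by simp [htr])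
  exact (sub_eq_zero.mp ((smul_eq_zero.mp hzero).resolve_left (by norm_num))).symm

theorem eq_one_or_eq_neg_one_of_trace_mul_eq_trace {σ E : Module.End K V} (hσ : σ * σ = 1)
    (hcomm : E * σ = σ * E) (hE : E * E = (Module.finrank K V : K) • E)
    (htrE : LinearMap.trace K V (σ * E) = LinearMap.trace K V σ)
    (htr : LinearMap.trace K V σ ≠ 0) : σ = 1 ∨ σ = -1 := by
  set d := Module.finrank K V
  have hd0 : (d : K) ≠ 0 := fun h ↦ by
    have := Module.finrank_zero_iff.mp (Nat.cast_eq_zero.mp h)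
    exact htr (by rw [Subsingleton.elim σ 0, map_zero])
  let P : Module.End K V := (d : K)⁻¹ • E
  have hP : P * P = P := by
    rw [smul_mul_smul, hE, smul_smul, mul_assoc, inv_mul_cancel₀ hd0, mul_one]
  have hσP : σ * P * (σ * P) * (σ * P) = σ * P := by
    have hPσ : P * σ = σ * P := by simp [P, hcomm]
    rw [mul_assoc σ P, ← mul_assoc P, hPσ, mul_assoc σ P P, hP, ← mul_assoc σ σ, hσ, one_mul,
      ← mul_assoc, hPσ, mul_assoc, hP]
  obtain ⟨m, n, hsub, hadd⟩ := exists_trace_eq_natCast_sub_and_trace_sq_eq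
    (show σ * σ * σ = σ by rw [hσ, one_mul])
  obtain ⟨m', n', hP_sub, -⟩ := exists_trace_eq_natCast_sub_and_trace_sq_eq hσP
  have hmn : (m : ℤ) + n = d := by
    rw [hσ, LinearMap.trace_one] at hadd
    exact_mod_cast hadd.symm
  have hdvd : (d : ℤ) ∣ m - n := by
    refine ⟨m' - n', ?_⟩
    have : (m - n : K) = d * (m' - n') := by
      rw [← hsub, ← hP_sub, mul_smul_comm, map_smul, htrE, smul_eq_mul, mul_inv_cancel_left₀ hd0]
    exact_mod_cast this
  have hne : (m : ℤ) - n ≠ 0 := fun h ↦ htr (by rw [hsub]; exact_mod_cast h)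
  have hzero : n = 0 ∨ m = 0 := by
    by_contra! hpos
    exact hne (Int.eq_zero_of_abs_lt_dvd hdvd (abs_lt.mpr (by omega)))
  rcases hzero with rfl | rfl
  · refine .inl (eq_one_of_mul_self_eq_one_of_trace_eq_finrank hσ ?_)
    rw [hsub]
    simpa using congr(($hmn : K))
  · refine .inr (neg_eq_iff_eq_neg.mp
      (eq_one_of_mul_self_eq_one_of_trace_eq_finrank (by simpa using hσ) ?_))
    rw [map_neg, hsub, neg_sub, sub_eq_add_neg, add_comm]
    simpa using congr(($hmn : K))

end Field

theorem eq_one_or_eq_neg_one_of_trace_mul_eq_trace_of_isDomain {R M : Type*} [CommRing R]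
    [IsDomain R] [CharZero R] [AddCommGroup M] [Module R M] [Module.Free R M] [Module.Finite R M]
    {σ E : Module.End R M} (hσ : σ * σ = 1) (hcomm : E * σ = σ * E)
    (hE : E * E = (Module.finrank R M : R) • E)
    (htrE : LinearMap.trace R M (σ * E) = LinearMap.trace R M σ)
    (htr : LinearMap.trace R M σ ≠ 0) : σ = 1 ∨ σ = -1 := by
  let K := FractionRing R
  have hinj {f g : Module.End R M} (h : f.baseChange K = g.baseChange K) : f = g := by
    ext x
    apply Module.Flat.tensorProduct_mk_injective (R := R) (S := K) M
    simpa using congr($h (1 ⊗ₜ x))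
  have hK := eq_one_or_eq_neg_one_of_trace_mul_eq_trace
    (σ := σ.baseChange K) (E := E.baseChange K)
    (by rw [← LinearMap.baseChange_mul, hσ, LinearMap.baseChange_one])
    (by rw [← LinearMap.baseChange_mul, hcomm, LinearMap.baseChange_mul])
    (by rw [← LinearMap.baseChange_mul, hE, LinearMap.baseChange_smul, Module.finrank_baseChange,
      Nat.cast_smul_eq_nsmul, Nat.cast_smul_eq_nsmul])
    (by rw [← LinearMap.baseChange_mul, LinearMap.trace_baseChange, LinearMap.trace_baseChange,
      htrE])
    (by rwa [LinearMap.trace_baseChange, map_ne_zero_iff _ (IsFractionRing.injective R K)])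
  refine hK.imp (fun h ↦ hinj ?_) (fun h ↦ hinj ?_)
  · rw [h, LinearMap.baseChange_one]
  · rw [h, LinearMap.baseChange_neg, LinearMap.baseChange_one]

end Involution

section RegularCharacter

variable {R H : Type*} [CommRing R] [Ring H]

variable (R H) in
/-- The character `a ↦ tr (x ↦ a x)` of the left regular representation. -/
noncomputable def regularCharacter [Algebra R H] : H →ₗ[R] R :=
  LinearMap.trace R H ∘ₗ LinearMap.mul R H

theorem regularCharacter_apply [Algebra R H] (a : H) :
    regularCharacter R H a = LinearMap.trace R H (LinearMap.mulLeft R a) := rfl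

theorem contractFst_comul_comp_contractFst_comul [Bialgebra R H] (p q : H →ₗ[R] R) :
    (contractFst p ∘ₗ comul) ∘ₗ (contractFst q ∘ₗ comul) =
      contractFst (toConv q * toConv p).ofConv ∘ₗ comul := by
  let g : H ⊗[R] (H ⊗[R] H) →ₗ[R] H := contractFst p ∘ₗ contractFst q
  have hg : contractFst (toConv q * toConv p).ofConv =
      g ∘ₗ (TensorProduct.assoc R H H H).toLinearMap ∘ₗ comul.rTensor H := by
    ext a b
    simp [← (ℛ R a).eq, g, sum_tmul, LinearMap.convMul_apply, smul_smul, Finset.sum_smul, mul_comm]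
  ext a
  rw [hg]
  simp only [LinearMap.comp_apply, LinearEquiv.coe_coe, coassoc_apply]
  simp [← (ℛ R a).eq, g]

variable [HopfAlgebra R H] [Module.Free R H] [Module.Finite R H]

theorem trace_mulLeft_comul (a : H) :
    LinearMap.trace R (H ⊗[R] H) (LinearMap.mulLeft R (comul (R := R) a)) =
      Module.finrank R H * regularCharacter R H a := by
  let θ : Module.End R (H ⊗[R] H) :=
    LinearMap.mul' R (H ⊗[R] H) ∘ₗ map comul (TensorProduct.mk R H H 1)
  let θ' : Module.End R (H ⊗[R] H) :=
    LinearMap.mul' R (H ⊗[R] H) ∘ₗ map ((antipode R).lTensor H ∘ₗ comul) (TensorProduct.mk R H H 1)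
  have hθθ' : θ * θ' = 1 := by
    ext x y
    have hxy : ∑ i ∈ (ℛ R x).index, comul (R := R) ((ℛ R x).left i) *
        ((1 : H) ⊗ₜ (antipode R ((ℛ R x).right i) * y)) = x ⊗ₜ y := by
      simpa [Finset.sum_mul, mul_assoc] using
        congr($(sum_comul_mul_antipode (ℛ R x)) * ((1 : H) ⊗ₜ[R] y))
    refine Eq.trans ?_ hxy
    simp [θ, θ', ← (ℛ R x).eq, sum_tmul]
  have hconj : LinearMap.mulLeft R (comul (R := R) a) * θ =
      θ * (LinearMap.mulLeft R a).rTensor H := by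
    ext; simp [θ, mul_assoc]
  have htrace : LinearMap.mulLeft R (comul (R := R) a) =
      θ * ((LinearMap.mulLeft R a).rTensor H * θ') := by
    rw [← mul_assoc, ← hconj, mul_assoc, hθθ', mul_one]
  rw [htrace, LinearMap.trace_mul_comm, mul_assoc, mul_eq_one_comm.mp hθθ', mul_one,
    LinearMap.rTensor, LinearMap.trace_tensorProduct', LinearMap.trace_id, mul_comm]
  rfl

theorem regularCharacter_convMul_self :
    toConv (regularCharacter R H) * toConv (regularCharacter R H) =
      (Module.finrank R H : R) • toConv (regularCharacter R H) := by
  have htmul (t : H ⊗[R] H) : LinearMap.mul' R R (map (regularCharacter R H)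
      (regularCharacter R H) t) = LinearMap.trace R (H ⊗[R] H) (LinearMap.mulLeft R t) := by
    induction t with
    | zero => simp [LinearMap.mulLeft_zero_eq_zero]
    | add s t hs ht =>
      have : LinearMap.mulLeft R (s + t) = LinearMap.mulLeft R s + LinearMap.mulLeft R t := by
        ext; simp [add_mul]
      simp [hs, ht, this]
    | tmul u v =>
      have : LinearMap.mulLeft R (u ⊗ₜ[R] v) =
          map (LinearMap.mulLeft R u) (LinearMap.mulLeft R v) := by
        ext; simp
      simp [this, LinearMap.trace_tensorProduct', regularCharacter_apply]
  ext a
  simp [LinearMap.convMul_apply, htmul, trace_mulLeft_comul]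

theorem IsNormalizedIntegral.regularCharacter_antipodeSq [IsDomain R] {Λ : H}
    (hΛ : IsNormalizedIntegral R Λ) (htr : LinearMap.trace R H (antipodeSq R H) ≠ 0) (a : H) :
    regularCharacter R H (antipodeSq R H a) = regularCharacter R H a := by
  have hinvol : antipodeSq R H * antipodeSq R H = 1 := LinearMap.ext (hΛ.antipodeSq_antipodeSq htr)
  have hconj : LinearMap.mulLeft R (antipodeSq R H a) =
      antipodeSq R H * (LinearMap.mulLeft R a * antipodeSq R H) := by
    ext x
    simp [hΛ.antipodeSq_antipodeSq htr x]
  rw [regularCharacter_apply, hconj, LinearMap.trace_mul_comm, mul_assoc, hinvol, mul_one,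
    regularCharacter_apply]

theorem antipodeSq_eq_one_of_charZero [IsDomain R] [CharZero R]
    {Λ : H} (hΛ : IsNormalizedIntegral R Λ) (htr : LinearMap.trace R H (antipodeSq R H) ≠ 0) :
    antipodeSq R H = 1 := by
  have hinvol : antipodeSq R H * antipodeSq R H = 1 := LinearMap.ext (hΛ.antipodeSq_antipodeSq htr)
  let E : Module.End R H := contractFst (regularCharacter R H) ∘ₗ comul
  have hcomm : E * antipodeSq R H = antipodeSq R H * E := by
    ext a
    simp [E, ← (ℛ R a).eq, hΛ.regularCharacter_antipodeSq htr]
  have hE : E * E = (Module.finrank R H : R) • E := by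
    rw [Module.End.mul_eq_comp, contractFst_comul_comp_contractFst_comul,
      regularCharacter_convMul_self]
    ext a
    simp [E, ← (ℛ R a).eq, Finset.smul_sum, smul_smul]
  have htrE : LinearMap.trace R H (antipodeSq R H * E) = LinearMap.trace R H (antipodeSq R H) := by
    have h := hΛ.trace_contractFst_lTensor_antipodeSq_comul htr (regularCharacter R H)
    rw [regularCharacter_apply, hΛ.trace_mulLeft_eq_one, one_mul] at h
    rw [← h]
    congr 1
    ext a
    simp [E, ← (ℛ R a).eq]
  refine (eq_one_or_eq_neg_one_of_trace_mul_eq_trace_of_isDomain hinvol hcomm hE htrE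
    htr).resolve_right fun h ↦ ?_
  have hcounit : (1 : R) = -1 := by simpa using congr(counit (R := R) ($h 1))
  exact two_ne_zero (by linear_combination hcounit : (2 : R) = 0)

end RegularCharacter

/-! ### Congruences and reductions -/

section Multiples

variable {W M N : Type*} [CommRing W] [AddCommGroup M] [Module W M] [AddCommGroup N] [Module W N]

/-- The submodule `q M`. Congruence modulo `q` of elements of `M` is expressed as membership of
their difference in it. -/
def multiples (q : W) : Submodule W M := LinearMap.range (LinearMap.lsmul W M q)

theorem mem_multiples {q : W} {x : M} : x ∈ multiples q ↔ ∃ m, q • m = x := Iff.rfl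

theorem smul_mem_multiples (q : W) (x : M) : q • x ∈ multiples q := ⟨x, rfl⟩

theorem multiples_le_of_dvd {q r : W} (h : q ∣ r) :
    (multiples r : Submodule W M) ≤ multiples q := by
  obtain ⟨c, rfl⟩ := h
  rintro _ ⟨m, rfl⟩
  exact ⟨c • m, (mul_smul q c m).symm⟩

theorem map_mem_multiples {q : W} {x : M} (f : M →ₗ[W] N) (hx : x ∈ multiples q) :
    f x ∈ multiples q := by
  obtain ⟨m, rfl⟩ := hx
  exact ⟨f m, (map_smul f q m).symm⟩

theorem smul_mem_multiples_mul {q r : W} {x : M} (hx : x ∈ multiples r) :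
    q • x ∈ multiples (q * r) := by
  obtain ⟨m, rfl⟩ := hx
  exact ⟨m, mul_smul q r m⟩

theorem mem_multiples_of_smul_mem_multiples_mul [IsDomain W] [Module.IsTorsionFree W M] {p q : W}
    (hq : q ≠ 0) {x : M} (h : q • x ∈ multiples (q * p)) : x ∈ multiples p := by
  obtain ⟨m, hm⟩ := h
  exact ⟨m, smul_right_injective M hq ((mul_smul q p m).symm.trans hm)⟩

theorem mem_multiples_of_forall_apply_mem [Module.Projective W M] {q : W} {f : M →ₗ[W] N}
    (h : ∀ m, f m ∈ multiples q) : f ∈ multiples q := by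
  obtain ⟨g, hg⟩ := Module.projective_lifting_property (LinearMap.lsmul W N q).rangeRestrict
    (f.codRestrict _ h) (LinearMap.surjective_rangeRestrict _)
  exact ⟨g, LinearMap.ext fun m ↦ congr(($hg m : N))⟩

end Multiples

section IsMulMod

variable {R A B C : Type*} [CommRing R] [Ring A] [Algebra R A] [Ring B] [Algebra R B]
  [Ring C] [Algebra R C]

/-- Multiplicativity modulo `q` of a linear map of algebras; for `q = 0` it is multiplicativity. -/
def IsMulMod (q : R) (f : A →ₗ[R] B) : Prop := ∀ x y, f (x * y) - f x * f y ∈ multiples q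

theorem isMulMod_zero_iff {f : A →ₗ[R] B} :
    IsMulMod (0 : R) f ↔ ∀ x y, f (x * y) = f x * f y := by
  simp [IsMulMod, mem_multiples, @eq_comm B 0, sub_eq_zero]

namespace IsMulMod

theorem of_map_mul (q : R) {f : A →ₗ[R] B} (h : ∀ x y, f (x * y) = f x * f y) : IsMulMod q f :=
  fun x y ↦ by simp [h, zero_mem]

theorem of_tmul {q : R} {f : A ⊗[R] B →ₗ[R] C}
    (h : ∀ a b a' b', f ((a * a') ⊗ₜ (b * b')) - f (a ⊗ₜ b) * f (a' ⊗ₜ b') ∈ multiples q) :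
    IsMulMod q f := by
  intro s t
  induction s with
  | zero => simp [zero_mem]
  | add x y hx hy => simpa [add_mul, add_sub_add_comm] using add_mem hx hy
  | tmul a b =>
    induction t with
    | zero => simp [zero_mem]
    | add x y hx hy => simpa [mul_add, add_sub_add_comm] using add_mem hx hy
    | tmul a' b' => simpa using h a b a' b'

theorem comp {q : R} {g : B →ₗ[R] C} {f : A →ₗ[R] B} (hg : IsMulMod q g) (hf : IsMulMod q f) :
    IsMulMod q (g ∘ₗ f) := fun x y ↦ by
  simpa using add_mem (map_mem_multiples g (hf x y)) (hg (f x) (f y))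

theorem lTensor {q : R} {f : A →ₗ[R] B} (hf : IsMulMod q f) : IsMulMod q (f.lTensor C) :=
  of_tmul fun a b a' b' ↦ by
    simpa [tmul_sub] using map_mem_multiples (TensorProduct.mk R C B (a * a')) (hf b b')

theorem rTensor {q : R} {f : A →ₗ[R] B} (hf : IsMulMod q f) : IsMulMod q (f.rTensor C) :=
  of_tmul fun a b a' b' ↦ by
    simpa [sub_tmul] using map_mem_multiples ((TensorProduct.mk R B C).flip (b * b')) (hf a a')

theorem assoc (q : R) : IsMulMod q (TensorProduct.assoc R A B C).toLinearMap :=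
  of_map_mul q (map_mul (Algebra.TensorProduct.assoc R R R A B C))

end IsMulMod

end IsMulMod

section IsReduction

variable {W A H : Type*} [CommRing W] [Ring A] [Algebra W A] [Ring H] [Algebra W H]

/-- `π` is a reduction modulo `p`: it identifies its target with `A / pA`. -/
structure IsReduction (p : W) (π : A →ₐ[W] H) : Prop where
  surjective : Function.Surjective π
  apply_eq_zero_iff (a : A) : π a = 0 ↔ a ∈ multiples p

namespace IsReduction

variable {p : W} {π : A →ₐ[W] H}

theorem map_eq_map_iff (hπ : IsReduction p π) {a b : A} : π a = π b ↔ a - b ∈ multiples p := by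
  rw [← sub_eq_zero, ← map_sub, hπ.apply_eq_zero_iff]

theorem apply_eq_zero_of_dvd (hπ : IsReduction p π) {q : W} (hpq : p ∣ q) {a : A}
    (ha : a ∈ multiples q) : π a = 0 :=
  (hπ.apply_eq_zero_iff a).2 (multiples_le_of_dvd hpq ha)

theorem exact (hπ : IsReduction p π) :
    Function.Exact (p • (LinearMap.id : A →ₗ[W] A)) π.toLinearMap :=
  hπ.apply_eq_zero_iff

end IsReduction

end IsReduction

section MapTensor

variable {W k : Type*} [CommRing W] [Field k] [Algebra W k]
  {A B C H K L : Type*} [Ring A] [Algebra W A] [Ring B] [Algebra W B] [Ring C] [Algebra W C]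
  [Ring H] [Algebra k H] [Algebra W H] [IsScalarTower W k H]
  [Ring K] [Algebra k K] [Algebra W K] [IsScalarTower W k K]
  [Ring L] [Algebra k L] [Algebra W L] [IsScalarTower W k L]

variable (k) in
/-- The tensor product of two maps from `W`-algebras to `k`-algebras, as a map from the
tensor product over `W` to the tensor product over `k`. -/
noncomputable def mapTensor (f : A →ₐ[W] H) (g : B →ₐ[W] K) : A ⊗[W] B →ₐ[W] H ⊗[k] K :=
  (Algebra.TensorProduct.mapOfCompatibleSMul k W W H K).comp (Algebra.TensorProduct.map f g)

@[simp] theorem mapTensor_tmul (f : A →ₐ[W] H) (g : B →ₐ[W] K) (a : A) (b : B) :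
    mapTensor k f g (a ⊗ₜ b) = f a ⊗ₜ g b := by
  simp [mapTensor]

theorem IsReduction.mapTensor {p : W} (hk : Function.Surjective (algebraMap W k))
    {f : A →ₐ[W] H} {g : B →ₐ[W] K} (hf : IsReduction p f) (hg : IsReduction p g) :
    IsReduction p (mapTensor k f g) := by
  have : CompatibleSMul W k H K := ⟨fun c x y ↦ by
    obtain ⟨c, rfl⟩ := hk c
    simp only [algebraMap_smul, smul_tmul]⟩
  have hbij : Function.Bijective (Algebra.TensorProduct.mapOfCompatibleSMul k W W H K) :=
    (Algebra.TensorProduct.equivOfCompatibleSMul k W W H K).bijective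
  refine ⟨hbij.2.comp (map_surjective hf.surjective hg.surjective), fun t ↦ ?_⟩
  have hker := map_ker hf.exact hf.surjective hg.exact hg.surjective
  rw [LinearMap.lTensor_smul, LinearMap.rTensor_smul, LinearMap.lTensor_id, LinearMap.rTensor_id,
    sup_idem] at hker
  exact (map_eq_zero_iff _ hbij.1).trans (SetLike.ext_iff.1 hker t)

theorem mapTensor_lTensor (π : A →ₐ[W] H) (πB : B →ₐ[W] K) (πC : C →ₐ[W] L) (f : B →ₗ[W] C)
    (F : K →ₗ[k] L) (h : ∀ b, πC (f b) = F (πB b)) (t : A ⊗[W] B) :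
    mapTensor k π πC (f.lTensor A t) = F.lTensor H (mapTensor k π πB t) := by
  induction t <;> simp_all

theorem mapTensor_rTensor (π : A →ₐ[W] H) (πB : B →ₐ[W] K) (πC : C →ₐ[W] L) (f : B →ₗ[W] C)
    (F : K →ₗ[k] L) (h : ∀ b, πC (f b) = F (πB b)) (t : B ⊗[W] A) :
    mapTensor k πC π (f.rTensor A t) = F.rTensor H (mapTensor k πB π t) := by
  induction t <;> simp_all

theorem mapTensor_assoc (π : A →ₐ[W] H) (πB : B →ₐ[W] K) (πC : C →ₐ[W] L)
    (t : (A ⊗[W] B) ⊗[W] C) :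
    mapTensor k π (mapTensor k πB πC) (TensorProduct.assoc W A B C t) =
      TensorProduct.assoc k H K L (mapTensor k (mapTensor k π πB) πC t) := by
  induction t with
  | tmul z c => induction z <;> simp_all [add_tmul]
  | _ => simp_all

end MapTensor

/-! ### Separability -/

section Separability

variable {W A B K : Type*} [CommRing W] [Ring A] [Algebra W A] [Ring B] [Algebra W B]
  [Ring K] [Algebra W K]

variable (W) in
/-- `e = ∑ xᵢ ⊗ yᵢ` is a separability idempotent of `A`: `∑ xᵢ yᵢ = 1` and
`∑ a xᵢ ⊗ yᵢ = ∑ xᵢ ⊗ yᵢ a`. -/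
structure IsSeparabilityIdempotent (e : A ⊗[W] A) : Prop where
  mul'_eq_one : LinearMap.mul' W A e = 1
  tmul_one_mul (a : A) : (a ⊗ₜ 1) * e = e * (1 ⊗ₜ a)

/-- The defect of multiplicativity is a Hochschild 2-cocycle. -/
theorem IsMulMod.exists_cocycle [IsDomain W] [Module.Projective W A] [Module.IsTorsionFree W B]
    {q : W} (hq : q ≠ 0) {f : A →ₗ[W] B} (hf : IsMulMod q f) :
    ∃ c : A ⊗[W] A →ₗ[W] B, (∀ a b, f (a * b) = f a * f b + q • c (a ⊗ₜ b)) ∧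
      ∀ a b d, f a * c (b ⊗ₜ d) + c (a ⊗ₜ (b * d)) = c ((a * b) ⊗ₜ d) + c (a ⊗ₜ b) * f d := by
  obtain ⟨c, hc⟩ := mem_multiples.1 <| mem_multiples_of_forall_apply_mem (q := q)
    (f := f ∘ₗ LinearMap.mul' W A - LinearMap.mul' W B ∘ₗ TensorProduct.map f f) fun t ↦ by
      induction t with
      | zero => simp [zero_mem]
      | add t u ht hu => rw [map_add]; exact add_mem ht hu
      | tmul a b => simpa using hf a b
  have hfc (a b : A) : f (a * b) = f a * f b + q • c (a ⊗ₜ b) := by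
    simpa [eq_comm, sub_eq_iff_eq_add'] using LinearMap.congr_fun hc (a ⊗ₜ b)
  refine ⟨c, hfc, fun a b d ↦ ?_⟩
  refine smul_right_injective B hq (add_left_cancel (a := f a * f b * f d) ?_)
  have hassoc := congrArg f (mul_assoc a b d)
  rw [hfc, hfc, hfc, hfc] at hassoc
  simp only [mul_add, add_mul, mul_smul_comm, smul_mul_assoc, mul_assoc, add_assoc] at hassoc
  simp only [smul_add, mul_assoc]
  rw [← hassoc, add_comm (q • c ((a * b) ⊗ₜ d))]

namespace IsSeparabilityIdempotent

variable {e : A ⊗[W] A} (he : IsSeparabilityIdempotent W e)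
include he

/-- The vanishing of the first Hochschild cohomology. -/
theorem exists_eq_commutator (ρ : A →ₐ[W] K) (d : A →ₗ[W] K)
    (hd : ∀ a b, d (a * b) = d a * ρ b + ρ a * d b) :
    ∃ ψ, ∀ a, d a = ψ * ρ a - ρ a * ψ := by
  let T : A ⊗[W] A →ₗ[W] K := LinearMap.mul' W K ∘ₗ TensorProduct.map d ρ.toLinearMap
  have hleft (a : A) (t) : T ((a ⊗ₜ 1) * t) = d a * ρ (LinearMap.mul' W A t) + ρ a * T t := by
    induction t <;> simp_all [T, mul_add, add_mul, mul_assoc, add_add_add_comm]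
  have hright (a : A) (t) : T (t * (1 ⊗ₜ a)) = T t * ρ a := by
    induction t <;> simp_all [T, add_mul, mul_assoc]
  refine ⟨T e, fun a ↦ ?_⟩
  rw [← hright, ← he.tmul_one_mul, hleft, he.mul'_eq_one, map_one, mul_one, add_sub_cancel_right]

/-- The vanishing of the second Hochschild cohomology. -/
theorem exists_eq_coboundary (ρ : A →ₐ[W] K) (c : A ⊗[W] A →ₗ[W] K)
    (hc : ∀ a b d, ρ a * c (b ⊗ₜ d) + c (a ⊗ₜ (b * d)) =
      c ((a * b) ⊗ₜ d) + c (a ⊗ₜ b) * ρ d) :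
    ∃ s : A →ₗ[W] K, ∀ a b, c (a ⊗ₜ b) = ρ a * s b - s (a * b) + s a * ρ b := by
  let T : A ⊗[W] A →ₗ[W] A →ₗ[W] K := TensorProduct.curry
    (LinearMap.mul' W K ∘ₗ TensorProduct.map ρ.toLinearMap c ∘ₗ TensorProduct.assoc W A A A)
  have hleft (a b : A) (t) : T ((a ⊗ₜ 1) * t) b = ρ a * T t b := by
    induction t <;> simp_all [T, mul_add, mul_assoc]
  have hright (a b : A) (t) : T (t * (1 ⊗ₜ a)) b =
      ρ (LinearMap.mul' W A t) * c (a ⊗ₜ b) + T t (a * b) - T t a * ρ b := by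
    induction t with
    | zero => simp
    | add t u ht hu =>
      simp only [add_mul, map_add, LinearMap.add_apply, ht, hu]
      abel
    | tmul x y => simp [T, eq_sub_of_add_eq (hc y a b).symm, mul_sub, mul_add, mul_assoc]
  refine ⟨T e, fun a b ↦ ?_⟩
  rw [← hleft, he.tmul_one_mul, hright, he.mul'_eq_one, map_one, one_mul]
  abel

theorem exists_isMulMod_add_smul [IsDomain W] [Module.Projective W A] [Module.IsTorsionFree W B]
    {p q : W} (hq : q ≠ 0) (hpq : p ∣ q) {π : B →ₐ[W] K} (hπ : IsReduction p π) {f : A →ₗ[W] B}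
    (hf : IsMulMod q f) (hf1 : π (f 1) = 1) :
    ∃ s : A →ₗ[W] B, IsMulMod (q * p) (f + q • s) := by
  obtain ⟨c, hfc, hcocycle⟩ := hf.exists_cocycle hq
  obtain ⟨ρ, hρ⟩ : ∃ ρ : A →ₐ[W] K, ∀ a, ρ a = π (f a) :=
    ⟨AlgHom.ofLinearMap (π.toLinearMap ∘ₗ f) hf1 fun a b ↦ by
      simp [hfc, hπ.apply_eq_zero_of_dvd hpq (smul_mem_multiples q _), -map_smul], fun _ ↦ rfl⟩
  obtain ⟨s', hs'⟩ := he.exists_eq_coboundary ρ (π.toLinearMap ∘ₗ c) fun a b d ↦ by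
    simpa [hρ] using congrArg π (hcocycle a b d)
  obtain ⟨s, rfl⟩ := Module.projective_lifting_property π.toLinearMap s' hπ.surjective
  refine ⟨s, fun a b ↦ ?_⟩
  have hmem : c (a ⊗ₜ b) - (f a * s b - s (a * b) + s a * f b) ∈ multiples p :=
    (hπ.apply_eq_zero_iff _).1 <| by simpa [hρ, sub_eq_zero] using hs' a b
  have hexpand : (f + q • s) (a * b) - (f + q • s) a * (f + q • s) b =
      q • (c (a ⊗ₜ b) - (f a * s b - s (a * b) + s a * f b)) - (q * q) • (s a * s b) := by
    simp only [LinearMap.add_apply, LinearMap.smul_apply, hfc, smul_add, smul_sub, add_mul, mul_add,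
      smul_mul_assoc, mul_smul_comm, mul_smul]
    abel
  rw [hexpand]
  exact sub_mem (smul_mem_multiples_mul hmem)
    (multiples_le_of_dvd (mul_dvd_mul_left q hpq) (smul_mem_multiples _ _))

end IsSeparabilityIdempotent

end Separability

/-! ### The cobar complex -/

section Cobar

variable {R M N N' P Q Q' : Type*} [CommRing R] [AddCommGroup M] [Module R M]
  [AddCommGroup N] [Module R N] [AddCommGroup N'] [Module R N'] [AddCommGroup P] [Module R P]
  [AddCommGroup Q] [Module R Q] [AddCommGroup Q'] [Module R Q']

/-- The map `f ⊗ 1`, with values reassociated to the right: in the cobar complex of iterated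
tensor powers `A ⊗ (A ⊗ ⋯)`, it applies `f` to the first tensor factor. -/
noncomputable def rTensorAssoc (f : M →ₗ[R] P ⊗[R] Q) (N : Type*) [AddCommGroup N] [Module R N] :
    M ⊗[R] N →ₗ[R] P ⊗[R] (Q ⊗[R] N) :=
  (TensorProduct.assoc R P Q N).toLinearMap ∘ₗ f.rTensor N

theorem rTensorAssoc_tmul (f : M →ₗ[R] P ⊗[R] Q) (m : M) (n : N) :
    rTensorAssoc f N (m ⊗ₜ n) = TensorProduct.assoc R P Q N (f m ⊗ₜ n) := rfl

theorem lTensor_lTensor_rTensorAssoc (g : N →ₗ[R] N') (f : M →ₗ[R] P ⊗[R] Q) (t : M ⊗[R] N) :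
    (g.lTensor Q).lTensor P (rTensorAssoc f N t) = rTensorAssoc f N' (g.lTensor M t) := by
  induction t with
  | tmul m n =>
    simp only [rTensorAssoc_tmul, LinearMap.lTensor_tmul]
    generalize f m = z
    induction z <;> simp_all [add_tmul]
  | _ => simp_all

/-- The map `δ ⊗ 1` for `δ` with values in a threefold tensor product, with values reassociated to
the right. -/
noncomputable def rTensorAssoc₃ (δ : M →ₗ[R] P ⊗[R] (Q ⊗[R] Q')) (N : Type*) [AddCommGroup N]
    [Module R N] : M ⊗[R] N →ₗ[R] P ⊗[R] (Q ⊗[R] (Q' ⊗[R] N)) :=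
  (TensorProduct.assoc R Q Q' N).toLinearMap.lTensor P ∘ₗ rTensorAssoc δ N

theorem lTensor_rTensorAssoc {Q₁ Q₂ : Type*} [AddCommGroup Q₁] [Module R Q₁] [AddCommGroup Q₂]
    [Module R Q₂] (g : Q →ₗ[R] Q₁ ⊗[R] Q₂) (f : M →ₗ[R] P ⊗[R] Q) (t : M ⊗[R] N) :
    (rTensorAssoc g N).lTensor P (rTensorAssoc f N t) =
      rTensorAssoc₃ (g.lTensor P ∘ₗ f) N t := by
  induction t with
  | tmul m n =>
    simp only [rTensorAssoc₃, LinearMap.comp_apply, rTensorAssoc_tmul]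
    generalize f m = z
    induction z <;> simp_all [add_tmul, rTensorAssoc_tmul]
  | _ => simp_all

theorem rTensorAssoc_rTensorAssoc {P₁ P₂ : Type*} [AddCommGroup P₁] [Module R P₁]
    [AddCommGroup P₂] [Module R P₂] (g : P →ₗ[R] P₁ ⊗[R] P₂) (f : M →ₗ[R] P ⊗[R] Q)
    (t : M ⊗[R] N) :
    rTensorAssoc g (Q ⊗[R] N) (rTensorAssoc f N t) =
      rTensorAssoc₃ (rTensorAssoc g Q ∘ₗ f) N t := by
  induction t with
  | tmul m n =>
    simp only [rTensorAssoc₃, LinearMap.comp_apply, rTensorAssoc_tmul]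
    generalize f m = z
    induction z with
    | tmul p q =>
      simp only [rTensorAssoc_tmul, TensorProduct.assoc_tmul]
      generalize g p = w
      induction w <;> simp_all [add_tmul]
    | _ => simp_all [add_tmul]
  | _ => simp_all

end Cobar

section CoassocDefect

variable {R A : Type*} [CommRing R] [AddCommGroup A] [Module R A]

/-- The failure of coassociativity `(1 ⊗ Δ) Δ - (Δ ⊗ 1) Δ` of a map `Δ : A → A ⊗ A`. -/
noncomputable def coassocDefect (Δ : A →ₗ[R] A ⊗[R] A) : A →ₗ[R] A ⊗[R] (A ⊗[R] A) :=
  Δ.lTensor A ∘ₗ Δ - rTensorAssoc Δ A ∘ₗ Δ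

theorem coassocDefect_apply (Δ : A →ₗ[R] A ⊗[R] A) (a : A) :
    coassocDefect Δ a = Δ.lTensor A (Δ a) - rTensorAssoc Δ A (Δ a) := rfl

theorem coassocDefect_eq_zero_iff {Δ : A →ₗ[R] A ⊗[R] A} :
    coassocDefect Δ = 0 ↔ ∀ a, Δ.lTensor A (Δ a) = rTensorAssoc Δ A (Δ a) := by
  simp [LinearMap.ext_iff, coassocDefect_apply, sub_eq_zero]

/-- The linearisation at `Δ` of the failure of coassociativity. -/
noncomputable def coassocDefectDeriv (Δ e : A →ₗ[R] A ⊗[R] A) : A →ₗ[R] A ⊗[R] (A ⊗[R] A) :=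
  Δ.lTensor A ∘ₗ e + e.lTensor A ∘ₗ Δ - rTensorAssoc Δ A ∘ₗ e - rTensorAssoc e A ∘ₗ Δ

theorem coassocDefectDeriv_apply (Δ e : A →ₗ[R] A ⊗[R] A) (a : A) :
    coassocDefectDeriv Δ e a = Δ.lTensor A (e a) + e.lTensor A (Δ a) - rTensorAssoc Δ A (e a) -
      rTensorAssoc e A (Δ a) := rfl

theorem coassocDefect_sub_smul (Δ e : A →ₗ[R] A ⊗[R] A) (q : R) (a : A) :
    coassocDefect (Δ - q • e) a =
      coassocDefect Δ a - q • coassocDefectDeriv Δ e a + (q * q) • coassocDefect e a := by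
  simp only [coassocDefect_apply, coassocDefectDeriv_apply, rTensorAssoc, LinearMap.comp_apply,
    LinearMap.lTensor_sub, LinearMap.lTensor_smul, LinearMap.rTensor_sub, LinearMap.rTensor_smul,
    LinearMap.sub_apply, LinearMap.smul_apply, map_sub, map_smul, smul_sub, smul_add, mul_smul]
  abel

/-- The alternating sum of the five ways of combining `X` and `Δ` in the associativity pentagon. -/
noncomputable def pentagonMap (Δ : A →ₗ[R] A ⊗[R] A) (X : A →ₗ[R] A ⊗[R] (A ⊗[R] A)) :
    A →ₗ[R] A ⊗[R] (A ⊗[R] (A ⊗[R] A)) :=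
  X.lTensor A ∘ₗ Δ - rTensorAssoc Δ (A ⊗[R] A) ∘ₗ X + (rTensorAssoc Δ A).lTensor A ∘ₗ X -
    (Δ.lTensor A).lTensor A ∘ₗ X + rTensorAssoc₃ X A ∘ₗ Δ

theorem pentagonMap_apply (Δ : A →ₗ[R] A ⊗[R] A) (X : A →ₗ[R] A ⊗[R] (A ⊗[R] A)) (a : A) :
    pentagonMap Δ X a = X.lTensor A (Δ a) - rTensorAssoc Δ (A ⊗[R] A) (X a) +
      (rTensorAssoc Δ A).lTensor A (X a) - (Δ.lTensor A).lTensor A (X a) +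
      rTensorAssoc₃ X A (Δ a) := rfl

theorem pentagonMap_smul (Δ : A →ₗ[R] A ⊗[R] A) (q : R) (X : A →ₗ[R] A ⊗[R] (A ⊗[R] A)) :
    pentagonMap Δ (q • X) = q • pentagonMap Δ X := by
  ext a
  simp only [pentagonMap_apply, rTensorAssoc₃, rTensorAssoc, LinearMap.comp_apply,
    LinearMap.lTensor_smul, LinearMap.rTensor_smul, LinearMap.smul_apply, map_smul, smul_sub,
    smul_add]

theorem pentagonMap_coassocDefect (Δ : A →ₗ[R] A ⊗[R] A) :
    pentagonMap Δ (coassocDefect Δ) = 0 := by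
  ext a
  have hl : (coassocDefect Δ).lTensor A (Δ a) =
      (Δ.lTensor A).lTensor A (Δ.lTensor A (Δ a)) -
        (rTensorAssoc Δ A).lTensor A (Δ.lTensor A (Δ a)) := by
    simp [coassocDefect, LinearMap.lTensor_sub, LinearMap.lTensor_comp]
  have hr : rTensorAssoc₃ (coassocDefect Δ) A (Δ a) =
      (rTensorAssoc Δ A).lTensor A (rTensorAssoc Δ A (Δ a)) -
        rTensorAssoc Δ (A ⊗[R] A) (rTensorAssoc Δ A (Δ a)) := by
    rw [lTensor_rTensorAssoc, rTensorAssoc_rTensorAssoc]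
    simp [coassocDefect, rTensorAssoc₃, rTensorAssoc, LinearMap.rTensor_sub]
  rw [pentagonMap_apply, hl, hr]
  simp only [coassocDefect_apply, map_sub, lTensor_lTensor_rTensorAssoc, LinearMap.zero_apply]
  abel

end CoassocDefect

section CobarDifferential

variable {R A M : Type*} [CommRing R] [Ring A] [Algebra R A] [AddCommGroup M] [Module R M]

variable (R A) in
/-- The map `φ ↦ φ ⊗ 1`. -/
noncomputable def appendOne : A ⊗[R] A →ₗ[R] A ⊗[R] (A ⊗[R] A) :=
  ((TensorProduct.mk R A A).flip 1).lTensor A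

/-- The second differential of the cobar complex of `(A, Δ)`. -/
noncomputable def cobarDiff₂ (Δ : A →ₗ[R] A ⊗[R] A) : A ⊗[R] A →ₗ[R] A ⊗[R] (A ⊗[R] A) :=
  TensorProduct.mk R A (A ⊗[R] A) 1 - rTensorAssoc Δ A + Δ.lTensor A - appendOne R A

/-- The third differential of the cobar complex of `(A, Δ)`. -/
noncomputable def cobarDiff₃ (Δ : A →ₗ[R] A ⊗[R] A) :
    A ⊗[R] (A ⊗[R] A) →ₗ[R] A ⊗[R] (A ⊗[R] (A ⊗[R] A)) :=
  TensorProduct.mk R A (A ⊗[R] (A ⊗[R] A)) 1 - rTensorAssoc Δ (A ⊗[R] A) +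
    (rTensorAssoc Δ A).lTensor A - (Δ.lTensor A).lTensor A + (appendOne R A).lTensor A

theorem contractFst_lTensor {N N' : Type*} [AddCommGroup N] [Module R N] [AddCommGroup N']
    [Module R N'] (p : M →ₗ[R] R) (f : N →ₗ[R] N') (t : M ⊗[R] N) :
    contractFst p (f.lTensor M t) = f (contractFst p t) := by
  induction t <;> simp_all

theorem contractFst_rTensorAssoc {Δ : A →ₗ[R] A ⊗[R] A} {p : A →ₗ[R] R}
    (hp : ∀ a, contractFst p (Δ a) = p a • 1) (t : A ⊗[R] M) :
    contractFst p (rTensorAssoc Δ M t) = 1 ⊗ₜ contractFst p t := by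
  induction t with
  | zero => simp
  | add s t hs ht => simp [hs, ht, tmul_add]
  | tmul a m =>
    have h (z : A ⊗[R] A) : contractFst p (TensorProduct.assoc R A A M (z ⊗ₜ m)) =
        contractFst p z ⊗ₜ m := by
      induction z <;> simp_all [add_tmul, smul_tmul']
    simp [rTensorAssoc_tmul, h, hp, smul_tmul]

theorem contractFst_cobarDiff₃ {Δ : A →ₗ[R] A ⊗[R] A} {p : A →ₗ[R] R}
    (hp : ∀ a, contractFst p (Δ a) = p a • 1) (ψ : A ⊗[R] (A ⊗[R] A)) :
    contractFst p (cobarDiff₃ Δ ψ) = p 1 • ψ - cobarDiff₂ Δ (contractFst p ψ) := by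
  simp only [cobarDiff₃, cobarDiff₂, LinearMap.add_apply, LinearMap.sub_apply, map_add, map_sub,
    TensorProduct.mk_apply, contractFst_tmul, contractFst_rTensorAssoc hp, contractFst_lTensor]
  abel

theorem contractFst_one_tmul_mul {B : Type*} [Ring B] [Algebra R B] (p : A →ₗ[R] R) (y : B)
    (t : A ⊗[R] B) : contractFst p ((1 ⊗ₜ y) * t) = y * contractFst p t := by
  induction t <;> simp_all [mul_add]

theorem contractFst_mul_one_tmul {B : Type*} [Ring B] [Algebra R B] (p : A →ₗ[R] R) (y : B)
    (t : A ⊗[R] B) : contractFst p (t * (1 ⊗ₜ y)) = contractFst p t * y := by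
  induction t <;> simp_all [add_mul]

theorem lTensor_tmul_one_mul {B C : Type*} [Ring B] [Algebra R B] [Ring C] [Algebra R C]
    (f : B →ₗ[R] C) (x : A) (t : A ⊗[R] B) :
    f.lTensor A ((x ⊗ₜ 1) * t) = (x ⊗ₜ 1) * f.lTensor A t := by
  induction t <;> simp_all [mul_add]

theorem lTensor_mul_tmul_one {B C : Type*} [Ring B] [Algebra R B] [Ring C] [Algebra R C]
    (f : B →ₗ[R] C) (x : A) (t : A ⊗[R] B) :
    f.lTensor A (t * (x ⊗ₜ 1)) = f.lTensor A t * (x ⊗ₜ 1) := by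
  induction t <;> simp_all [add_mul]

end CobarDifferential

section Homotopy

variable {R H B : Type*} [CommRing R] [Ring H] [HopfAlgebra R H] [Ring B] [Algebra R B]

theorem sum_antipode_mul_comul {a : H} {ι : Type*} (r : Coalgebra.Repr R a ι) :
    ∑ i ∈ r.index, (antipode R (r.left i) ⊗ₜ[R] (1 : H)) * comul (r.right i) = 1 ⊗ₜ a := by
  have h : toConv (tensorInl R H ∘ₗ antipode R) * toConv comul = toConv (tensorInr R H) := by
    rw [← tensorInl_convMul_tensorInr, ← mul_assoc, algHom_comp_antipode_convMul, one_mul]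
  simpa [← r.eq, LinearMap.convMul_apply (_ : WithConv (H →ₗ[R] H ⊗[R] H))] using congr($h a)

theorem contractFst_twistedTrace_tmul_one_mul (u : H) (t : H ⊗[R] B) :
    contractFst (twistedTrace R H) ((u ⊗ₜ 1) * t) =
      contractFst (twistedTrace R H) (t * (antipodeSq R H u ⊗ₜ 1)) := by
  induction t <;> simp_all [mul_add, add_mul, twistedTrace_mul u]

namespace IsNormalizedIntegral

variable [Module.Free R H] [Module.Finite R H] [IsDomain R] {Λ : H}
  (hΛ : IsNormalizedIntegral R Λ) (htr : LinearMap.trace R H (antipodeSq R H) ≠ 0)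
include hΛ htr

theorem sum_comul_mul_antipode_antipodeSq {a : H} {ι : Type*} (r : Coalgebra.Repr R a ι) :
    ∑ i ∈ r.index, comul (R := R) (r.right i) *
      (antipodeSq R H (antipode R (r.left i)) ⊗ₜ[R] (1 : H)) = 1 ⊗ₜ a := by
  let r' : Coalgebra.Repr R (antipodeSq R H a) ι :=
    ⟨r.index, fun i ↦ antipodeSq R H (r.left i), fun i ↦ antipodeSq R H (r.right i), by
      simp [comul_antipodeSq, ← r.eq]⟩
  have h := hΛ.antipodeSq_antipodeSq htr
  simp only [antipodeSq_apply] at h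
  simpa [r', antipodeSq_apply, h] using sum_comul_antipodeSq_mul_antipode r'

theorem commute_contractFst_twistedTrace (ρ : H →ₗ[R] B) {Φ : H ⊗[R] B}
    (hΦ : ∀ a, Commute (ρ.lTensor H (comul a)) Φ) (a : H) :
    Commute (ρ a) (contractFst (twistedTrace R H) Φ) := by
  have hleft := congr(ρ.lTensor H $(sum_antipode_mul_comul (ℛ R a)))
  have hright := congr(ρ.lTensor H $(hΛ.sum_comul_mul_antipode_antipodeSq htr (ℛ R a)))
  simp only [map_sum, LinearMap.lTensor_tmul, lTensor_tmul_one_mul, lTensor_mul_tmul_one]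
    at hleft hright
  rw [Commute, SemiconjBy, ← contractFst_one_tmul_mul, ← hleft, ← contractFst_mul_one_tmul,
    ← hright, Finset.sum_mul, Finset.mul_sum, map_sum, map_sum]
  refine Finset.sum_congr rfl fun i _ ↦ ?_
  rw [mul_assoc, contractFst_twistedTrace_tmul_one_mul, (hΦ _).eq, mul_assoc]

end IsNormalizedIntegral

/-- Integration over the first tensor factor contracts the cobar complex and preserves
centralisers. -/
theorem IsNormalizedIntegral.exists_commute_sub_cobarDiff₂ {k H : Type*} [Field k] [Ring H]
    [HopfAlgebra k H] [FiniteDimensional k H] {Λ : H} (hΛ : IsNormalizedIntegral k Λ)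
    (htr : LinearMap.trace k H (antipodeSq k H) ≠ 0) (ρ : H →ₗ[k] H ⊗[k] (H ⊗[k] H))
    {ψ : H ⊗[k] (H ⊗[k] H)} (h : ∀ a, Commute (ρ.lTensor H (comul a)) (cobarDiff₃ comul ψ)) :
    ∃ φ : H ⊗[k] H, ∀ a, Commute (ρ a) (ψ - cobarDiff₂ comul φ) := by
  refine ⟨(twistedTrace k H 1)⁻¹ • contractFst (twistedTrace k H) ψ, fun a ↦ ?_⟩
  have hcomm := hΛ.commute_contractFst_twistedTrace htr ρ h a
  rw [contractFst_cobarDiff₃ (hΛ.contractFst_twistedTrace_comul htr)] at hcomm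
  rw [← twistedTrace_one] at htr
  simpa [smul_sub, smul_smul, inv_mul_cancel₀ htr] using hcomm.smul_right (twistedTrace k H 1)⁻¹

end Homotopy

/-! ### Lifting the comultiplication -/

section Naturality

variable {W k : Type*} [CommRing W] [Field k] [Algebra W k]
  {A B C D H K L M : Type*} [Ring A] [Algebra W A] [Ring B] [Algebra W B] [Ring C] [Algebra W C]
  [Ring D] [Algebra W D] [Ring H] [Algebra k H] [Algebra W H] [IsScalarTower W k H]
  [Ring K] [Algebra k K] [Algebra W K] [IsScalarTower W k K]
  [Ring L] [Algebra k L] [Algebra W L] [IsScalarTower W k L]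
  [Ring M] [Algebra k M] [Algebra W M] [IsScalarTower W k M]

theorem mapTensor_rTensorAssoc {π : A →ₐ[W] H} {πB : B →ₐ[W] K} {πC : C →ₐ[W] L} (πD : D →ₐ[W] M)
    {f : A →ₗ[W] B ⊗[W] C} {F : H →ₗ[k] K ⊗[k] L} (h : ∀ a, mapTensor k πB πC (f a) = F (π a))
    (t : A ⊗[W] D) :
    mapTensor k πB (mapTensor k πC πD) (rTensorAssoc f D t) =
      rTensorAssoc F M (mapTensor k π πD t) := by
  simp only [rTensorAssoc, LinearMap.comp_apply, LinearEquiv.coe_coe, mapTensor_assoc]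
  rw [mapTensor_rTensor πD π _ f F h]

theorem mapTensor_rTensorAssoc₃ {π : A →ₐ[W] H} {δ : A →ₗ[W] A ⊗[W] (A ⊗[W] A)}
    {F : H →ₗ[k] H ⊗[k] (H ⊗[k] H)}
    (h : ∀ a, mapTensor k π (mapTensor k π π) (δ a) = F (π a)) (t : A ⊗[W] A) :
    mapTensor k π (mapTensor k π (mapTensor k π π)) (rTensorAssoc₃ δ A t) =
      rTensorAssoc₃ F H (mapTensor k π π t) := by
  simp only [rTensorAssoc₃, LinearMap.comp_apply]
  rw [mapTensor_lTensor _ _ _ _ (TensorProduct.assoc k H H H).toLinearMap (mapTensor_assoc π π π),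
    mapTensor_rTensorAssoc π h]

end Naturality

section CommutatorMap

variable {R A B M : Type*} [CommRing R] [Ring A] [Algebra R A] [Ring B] [Algebra R B]
  [AddCommGroup M] [Module R M]

/-- The map `m ↦ ψ f(m) - f(m) ψ`: the infinitesimal conjugation of `f` by `ψ`. -/
noncomputable def commutatorMap (ψ : B) (f : M →ₗ[R] B) : M →ₗ[R] B :=
  (LinearMap.mulLeft R ψ - LinearMap.mulRight R ψ) ∘ₗ f

theorem commutatorMap_apply (ψ : B) (f : M →ₗ[R] B) (m : M) :
    commutatorMap ψ f m = ψ * f m - f m * ψ := by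
  simp [commutatorMap]

theorem map_commutatorMap {C : Type*} [Ring C] [Algebra R C] {g : B →ₗ[R] C}
    (hg : ∀ x y, g (x * y) = g x * g y) (ψ : B) (f : M →ₗ[R] B) (m : M) :
    g (commutatorMap ψ f m) = g ψ * g (f m) - g (f m) * g ψ := by
  simp [commutatorMap_apply, hg]

theorem lTensor_commutatorMap (ψ : B) (f : M →ₗ[R] B) (t : A ⊗[R] M) :
    (commutatorMap ψ f).lTensor A t = (1 ⊗ₜ ψ) * f.lTensor A t - f.lTensor A t * (1 ⊗ₜ ψ) := by
  induction t with
  | tmul a m => simp [commutatorMap_apply, tmul_sub]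
  | zero => simp
  | add s t hs ht => simp only [map_add, hs, ht, mul_add, add_mul]; abel

theorem rTensor_commutatorMap (ψ : B) (f : M →ₗ[R] B) (t : M ⊗[R] A) :
    (commutatorMap ψ f).rTensor A t = (ψ ⊗ₜ 1) * f.rTensor A t - f.rTensor A t * (ψ ⊗ₜ 1) := by
  induction t with
  | tmul m a => simp [commutatorMap_apply, sub_tmul]
  | zero => simp
  | add s t hs ht => simp only [map_add, hs, ht, mul_add, add_mul]; abel

theorem assoc_tmul_one (φ : A ⊗[R] A) :
    TensorProduct.assoc R A A A (φ ⊗ₜ 1) = appendOne R A φ := by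
  induction φ <;> simp_all [appendOne, add_tmul]

theorem rTensorAssoc_commutatorMap (φ : A ⊗[R] A) (f : M →ₗ[R] A ⊗[R] A) (t : M ⊗[R] A) :
    rTensorAssoc (commutatorMap φ f) A t =
      appendOne R A φ * rTensorAssoc f A t - rTensorAssoc f A t * appendOne R A φ := by
  have hmul := isMulMod_zero_iff.1 (IsMulMod.assoc (R := R) (A := A) (B := A) (C := A) 0)
  simp only [rTensorAssoc, LinearMap.comp_apply, rTensor_commutatorMap, map_sub, hmul]
  simp only [LinearEquiv.coe_coe, assoc_tmul_one]

theorem rTensorAssoc₃_commutatorMap (ψ : A ⊗[R] (A ⊗[R] A)) (f : M →ₗ[R] A ⊗[R] (A ⊗[R] A))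
    (t : M ⊗[R] A) :
    rTensorAssoc₃ (commutatorMap ψ f) A t = (appendOne R A).lTensor A ψ * rTensorAssoc₃ f A t -
      rTensorAssoc₃ f A t * (appendOne R A).lTensor A ψ := by
  have happend : (TensorProduct.assoc R A A A).toLinearMap.lTensor A
      (TensorProduct.assoc R A (A ⊗[R] A) A (ψ ⊗ₜ 1)) = (appendOne R A).lTensor A ψ := by
    induction ψ <;> simp_all [add_tmul, assoc_tmul_one]
  have hmul := isMulMod_zero_iff.1 (IsMulMod.assoc (R := R) (A := A) (B := A ⊗[R] A) (C := A) 0)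
  have hmul' := isMulMod_zero_iff.1
    ((IsMulMod.assoc (R := R) (A := A) (B := A) (C := A) 0).lTensor (C := A))
  simp only [rTensorAssoc₃, rTensorAssoc, LinearMap.comp_apply, rTensor_commutatorMap, map_sub,
    hmul, hmul']
  simp only [LinearEquiv.coe_coe, happend]

end CommutatorMap

section IsMulMod

variable {R A B C D : Type*} [CommRing R] [Ring A] [Algebra R A] [Ring B] [Algebra R B]
  [Ring C] [Algebra R C] [Ring D] [Algebra R D]

theorem IsMulMod.rTensorAssoc {q : R} {f : A →ₗ[R] B ⊗[R] C} (hf : IsMulMod q f) :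
    IsMulMod q (rTensorAssoc f D) :=
  (IsMulMod.assoc q).comp hf.rTensor

theorem IsMulMod.derivation_mem_multiples [IsDomain R] [Module.IsTorsionFree R B] {p q : R}
    (hq : q ≠ 0) {f g δ : A →ₗ[R] B} (hf : IsMulMod (q * p) f) (hg : IsMulMod (q * p) g)
    (hδ : q • δ = f - g) (a b : A) : δ (a * b) - (δ a * f b + g a * δ b) ∈ multiples p := by
  refine mem_multiples_of_smul_mem_multiples_mul hq ?_
  have hδ' (a : A) : q • δ a = f a - g a := LinearMap.congr_fun hδ a
  have h := sub_mem (hf a b) (hg a b)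
  rw [smul_sub, smul_add, ← smul_mul_assoc, ← mul_smul_comm, hδ', hδ', hδ']
  convert h using 1
  noncomm_ring

end IsMulMod

section IteratedComul

variable (R H : Type*) [CommRing R] [Ring H] [Bialgebra R H]

/-- The iterated comultiplication `H → H ⊗ (H ⊗ H)`. -/
noncomputable def iteratedComul : H →ₐ[R] H ⊗[R] (H ⊗[R] H) :=
  (Algebra.TensorProduct.lTensor H (Bialgebra.comulAlgHom R H)).comp (Bialgebra.comulAlgHom R H)

variable {R H}

theorem lTensor_comul_comul (h : H) :
    comul.lTensor H (comul (R := R) h) = iteratedComul R H h := rfl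

theorem rTensorAssoc_comul_comul (h : H) :
    rTensorAssoc comul H (comul (R := R) h) = iteratedComul R H h :=
  coassoc_apply h

theorem coassocDefectDeriv_commutatorMap (φ : H ⊗[R] H) (h : H) :
    coassocDefectDeriv comul (commutatorMap φ comul) h =
      cobarDiff₂ comul φ * iteratedComul R H h - iteratedComul R H h * cobarDiff₂ comul φ := by
  have hmul := IsMulMod.of_map_mul 0 (Bialgebra.comul_mul (R := R) (A := H))
  rw [coassocDefectDeriv_apply, map_commutatorMap (isMulMod_zero_iff.1 hmul.lTensor),
    map_commutatorMap (isMulMod_zero_iff.1 hmul.rTensorAssoc), lTensor_commutatorMap,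
    rTensorAssoc_commutatorMap, rTensorAssoc_comul_comul, lTensor_comul_comul]
  simp only [cobarDiff₂, LinearMap.add_apply, LinearMap.sub_apply, TensorProduct.mk_apply, mul_add,
    mul_sub, add_mul, sub_mul]
  abel

theorem alternating_sum_commutator {B : Type*} [Ring B] (a b c d e u : B) :
    a * u - u * a - (b * u - u * b) + (c * u - u * c) - (d * u - u * d) + (e * u - u * e) =
      (a - b + c - d + e) * u - u * (a - b + c - d + e) := by
  noncomm_ring

theorem pentagonMap_commutatorMap (ψ : H ⊗[R] (H ⊗[R] H)) (h : H) :
    pentagonMap comul (commutatorMap ψ (iteratedComul R H).toLinearMap) h =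
      cobarDiff₃ comul ψ * (iteratedComul R H).toLinearMap.lTensor H (comul h) -
        (iteratedComul R H).toLinearMap.lTensor H (comul h) * cobarDiff₃ comul ψ := by
  have hmul := IsMulMod.of_map_mul 0 (Bialgebra.comul_mul (R := R) (A := H))
  have hrassoc : (rTensorAssoc comul H ∘ₗ comul (R := R)) = (iteratedComul R H).toLinearMap :=
    LinearMap.ext rTensorAssoc_comul_comul
  have hlTensor (f : H ⊗[R] H →ₗ[R] H ⊗[R] (H ⊗[R] H))
      (hf : f ∘ₗ comul = (iteratedComul R H).toLinearMap) :
      f.lTensor H (iteratedComul R H h) = (iteratedComul R H).toLinearMap.lTensor H (comul h) := by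
    rw [← hf, LinearMap.lTensor_comp]; rfl
  have hfirst : rTensorAssoc comul (H ⊗[R] H) (iteratedComul R H h) =
      (iteratedComul R H).toLinearMap.lTensor H (comul h) := by
    rw [← lTensor_comul_comul, ← lTensor_lTensor_rTensorAssoc, rTensorAssoc_comul_comul]
    exact hlTensor _ rfl
  have hlast : rTensorAssoc₃ (iteratedComul R H).toLinearMap H (comul h) =
      (iteratedComul R H).toLinearMap.lTensor H (comul h) := by
    have := lTensor_rTensorAssoc (N := H) (comul (R := R) (A := H)) comul (comul h)
    rw [rTensorAssoc_comul_comul, hlTensor _ hrassoc] at this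
    exact this.symm
  rw [pentagonMap_apply, map_commutatorMap (isMulMod_zero_iff.1 hmul.rTensorAssoc),
    map_commutatorMap (isMulMod_zero_iff.1 hmul.rTensorAssoc.lTensor),
    map_commutatorMap (isMulMod_zero_iff.1 hmul.lTensor.lTensor), lTensor_commutatorMap,
    rTensorAssoc₃_commutatorMap, AlgHom.toLinearMap_apply, hfirst, hlast, hlTensor _ hrassoc,
    hlTensor _ rfl]
  exact alternating_sum_commutator (B := H ⊗[R] (H ⊗[R] (H ⊗[R] H))) _ _ _ _ _ _

end IteratedComul

section Naturality

variable {W k : Type*} [CommRing W] [Field k] [Algebra W k]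
  {A H : Type*} [Ring A] [Algebra W A] [Ring H] [Algebra k H] [Algebra W H] [IsScalarTower W k H]
  {π : A →ₐ[W] H} {Δ : A →ₗ[W] A ⊗[W] A} {F : H →ₗ[k] H ⊗[k] H}

theorem mapTensor_coassocDefect (hΔ : ∀ a, mapTensor k π π (Δ a) = F (π a)) (a : A) :
    mapTensor k π (mapTensor k π π) (coassocDefect Δ a) = coassocDefect F (π a) := by
  rw [coassocDefect_apply, map_sub, mapTensor_lTensor _ _ _ _ F hΔ, mapTensor_rTensorAssoc π hΔ, hΔ,
    coassocDefect_apply]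

theorem mapTensor_coassocDefectDeriv (hΔ : ∀ a, mapTensor k π π (Δ a) = F (π a))
    {e : A →ₗ[W] A ⊗[W] A} {E : H →ₗ[k] H ⊗[k] H} (he : ∀ a, mapTensor k π π (e a) = E (π a))
    (a : A) : mapTensor k π (mapTensor k π π) (coassocDefectDeriv Δ e a) =
      coassocDefectDeriv F E (π a) := by
  simp only [coassocDefectDeriv_apply, map_add, map_sub, mapTensor_lTensor _ _ _ _ F hΔ,
    mapTensor_rTensorAssoc π hΔ, mapTensor_lTensor _ _ _ _ E he, mapTensor_rTensorAssoc π he,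
    hΔ, he]

theorem mapTensor_pentagonMap (hΔ : ∀ a, mapTensor k π π (Δ a) = F (π a))
    {δ : A →ₗ[W] A ⊗[W] (A ⊗[W] A)} {X : H →ₗ[k] H ⊗[k] (H ⊗[k] H)}
    (hδ : ∀ a, mapTensor k π (mapTensor k π π) (δ a) = X (π a)) (a : A) :
    mapTensor k π (mapTensor k π (mapTensor k π π)) (pentagonMap Δ δ a) =
      pentagonMap F X (π a) := by
  simp only [pentagonMap_apply, map_add, map_sub]
  rw [mapTensor_lTensor _ _ _ _ X hδ, mapTensor_rTensorAssoc (mapTensor k π π) hΔ,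
    mapTensor_lTensor _ _ _ _ (rTensorAssoc F H) (mapTensor_rTensorAssoc π hΔ),
    mapTensor_lTensor _ _ _ _ (F.lTensor H) (mapTensor_lTensor π π _ Δ F hΔ),
    mapTensor_rTensorAssoc₃ hδ, hδ, hΔ]

end Naturality

section IsMulMod

variable {R A B : Type*} [CommRing R] [Ring A] [Algebra R A] [Ring B] [Algebra R B]

theorem IsMulMod.sub_smul {q : R} {f : A →ₗ[R] B} (hf : IsMulMod q f) (e : A →ₗ[R] B) :
    IsMulMod q (f - q • e) := fun a b ↦ by
  convert sub_mem (hf a b) (smul_mem_multiples q (e (a * b) - e a * f b - f a * (e b) +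
    e a * (q • e b))) using 1
  simp only [LinearMap.sub_apply, LinearMap.smul_apply, mul_sub, sub_mul, smul_sub, smul_add,
    smul_mul_assoc, mul_smul_comm]
  abel

theorem IsMulMod.sub_smul_commutatorMap {q r : R} (hr : r ∣ q * q) {f : A →ₗ[R] B}
    (hf : IsMulMod r f) (ψ : B) : IsMulMod r (f - q • commutatorMap ψ f) := fun a b ↦ by
  have hfirst := sub_mem (hf a b)
    (map_mem_multiples (q • (LinearMap.mulLeft R ψ - LinearMap.mulRight R ψ)) (hf a b))
  convert sub_mem hfirst (multiples_le_of_dvd hr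
    (smul_mem_multiples (q * q) (commutatorMap ψ f a * commutatorMap ψ f b))) using 1
  simp only [LinearMap.sub_apply, LinearMap.smul_apply, commutatorMap_apply,
    LinearMap.mulLeft_apply, LinearMap.mulRight_apply, smul_sub, mul_sub, sub_mul, smul_mul_assoc,
    mul_smul_comm, mul_smul, mul_assoc]
  abel

end IsMulMod

section IsComulLift

variable {W k : Type*} [CommRing W] [Field k] [Algebra W k]
  {A H : Type*} [Ring A] [Algebra W A] [Ring H] [Bialgebra k H] [Algebra W H] [IsScalarTower W k H]

variable (k) in
/-- `Δ` lifts the comultiplication of `H` along `π` and satisfies the axioms of a comultiplication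
modulo `q`. -/
structure IsComulLift (π : A →ₐ[W] H) (q : W) (Δ : A →ₗ[W] A ⊗[W] A) : Prop where
  mapTensor_apply (a : A) : mapTensor k π π (Δ a) = comul (π a)
  isMulMod : IsMulMod q Δ
  coassocDefect_mem (a : A) : coassocDefect Δ a ∈ multiples q

namespace IsComulLift

theorem mapTensor_lTensor_apply {q : W} {π : A →ₐ[W] H} {Δ : A →ₗ[W] A ⊗[W] A}
    (hΔ : IsComulLift k π q Δ) (a : A) :
    mapTensor k π (mapTensor k π π) (Δ.lTensor A (Δ a)) = iteratedComul k H (π a) := by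
  rw [mapTensor_lTensor _ _ _ _ comul hΔ.mapTensor_apply, hΔ.mapTensor_apply, lTensor_comul_comul]

theorem mapTensor_rTensorAssoc_apply {q : W} {π : A →ₐ[W] H} {Δ : A →ₗ[W] A ⊗[W] A}
    (hΔ : IsComulLift k π q Δ) (a : A) :
    mapTensor k π (mapTensor k π π) (rTensorAssoc Δ A (Δ a)) = iteratedComul k H (π a) := by
  rw [mapTensor_rTensorAssoc π hΔ.mapTensor_apply, hΔ.mapTensor_apply, rTensorAssoc_comul_comul]

variable {p q : W} (hk : Function.Surjective (algebraMap W k)) {π : A →ₐ[W] H}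
  (hπ : IsReduction p π) {Δ : A →ₗ[W] A ⊗[W] A}
include hk hπ

theorem of_mapTensor_apply (hΔ : ∀ a, mapTensor k π π (Δ a) = comul (π a)) :
    IsComulLift k π p Δ where
  mapTensor_apply := hΔ
  isMulMod a b := ((hπ.mapTensor hk hπ).apply_eq_zero_iff _).1 <| by simp [hΔ]
  coassocDefect_mem a := ((hπ.mapTensor hk (hπ.mapTensor hk hπ)).apply_eq_zero_iff _).1 <| by
    rw [mapTensor_coassocDefect hΔ, coassocDefect_apply, lTensor_comul_comul,
      rTensorAssoc_comul_comul, sub_self]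

theorem mapTensor_sub_smul_apply (hpq : p ∣ q) (hΔ : IsComulLift k π q Δ) (e : A →ₗ[W] A ⊗[W] A)
    (a : A) : mapTensor k π π ((Δ - q • e) a) = comul (π a) := by
  rw [LinearMap.sub_apply, map_sub, hΔ.mapTensor_apply, LinearMap.smul_apply,
    (hπ.mapTensor hk hπ).apply_eq_zero_of_dvd hpq (smul_mem_multiples q _), sub_zero]

theorem sub_smul (hpq : p ∣ q) (hΔ : IsComulLift k π q Δ) (e : A →ₗ[W] A ⊗[W] A) :
    IsComulLift k π q (Δ - q • e) where
  mapTensor_apply := hΔ.mapTensor_sub_smul_apply hk hπ hpq e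
  isMulMod := hΔ.isMulMod.sub_smul e
  coassocDefect_mem a := by
    rw [coassocDefect_sub_smul]
    exact add_mem (sub_mem (hΔ.coassocDefect_mem a) (smul_mem_multiples q _))
      (multiples_le_of_dvd (dvd_mul_right q q) (smul_mem_multiples _ _))

end IsComulLift

end IsComulLift

section Step

variable {W k : Type*} [CommRing W] [IsDomain W] [Field k] [Algebra W k]
  {A H : Type*} [Ring A] [Algebra W A] [Module.Free W A] [Ring H] [Algebra W H]
  {p q : W} (hq : q ≠ 0) (hpq : p ∣ q) (hk : Function.Surjective (algebraMap W k))
  {e : A ⊗[W] A} (he : IsSeparabilityIdempotent W e)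

namespace IsComulLift

section Bialgebra

variable [Bialgebra k H] [IsScalarTower W k H] {π : A →ₐ[W] H} (hπ : IsReduction p π)
  {Δ : A →ₗ[W] A ⊗[W] A}
include hq hπ

include hk he in
/-- The failure of coassociativity is a derivation modulo `p`. -/
theorem exists_defect_eq_commutatorMap (hΔ : IsComulLift k π q Δ) (hmul : IsMulMod (q * p) Δ)
    {δ : A →ₗ[W] A ⊗[W] (A ⊗[W] A)} (hδ : q • δ = coassocDefect Δ) :
    ∃ ψ, ∀ a, mapTensor k π (mapTensor k π π) (δ a) =
      commutatorMap ψ (iteratedComul k H).toLinearMap (π a) := by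
  obtain ⟨ρ, hρ⟩ : ∃ ρ : A →ₐ[W] H ⊗[k] (H ⊗[k] H), ∀ a, ρ a = iteratedComul k H (π a) :=
    ⟨((iteratedComul k H).restrictScalars W).comp π, fun _ ↦ rfl⟩
  obtain ⟨ψ, hψ⟩ := he.exists_eq_commutator ρ
    ((mapTensor k π (mapTensor k π π)).toLinearMap ∘ₗ δ) fun a b ↦ by
      have h := ((hπ.mapTensor hk (hπ.mapTensor hk hπ)).apply_eq_zero_iff _).2 <|
        (hmul.lTensor.comp hmul).derivation_mem_multiples hq (hmul.rTensorAssoc.comp hmul) hδ a b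
      simp only [map_sub, map_add, map_mul, LinearMap.comp_apply, hΔ.mapTensor_lTensor_apply,
        hΔ.mapTensor_rTensorAssoc_apply] at h
      simpa [hρ] using sub_eq_zero.1 h
  exact ⟨ψ, fun a ↦ by simpa [commutatorMap_apply, hρ] using hψ a⟩

theorem commute_cobarDiff₃ (hΔ : IsComulLift k π q Δ) {δ : A →ₗ[W] A ⊗[W] (A ⊗[W] A)}
    (hδ : q • δ = coassocDefect Δ) {ψ : H ⊗[k] (H ⊗[k] H)}
    (hψ : ∀ a, mapTensor k π (mapTensor k π π) (δ a) =
      commutatorMap ψ (iteratedComul k H).toLinearMap (π a)) (h : H) :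
    Commute ((iteratedComul k H).toLinearMap.lTensor H (comul h)) (cobarDiff₃ comul ψ) := by
  obtain ⟨a, rfl⟩ := hπ.surjective h
  have hpentagon : pentagonMap Δ δ = 0 :=
    (smul_eq_zero_iff_right hq).1 (by rw [← pentagonMap_smul, hδ, pentagonMap_coassocDefect])
  have hzero := mapTensor_pentagonMap hΔ.mapTensor_apply hψ a
  rw [hpentagon, LinearMap.zero_apply, map_zero, pentagonMap_commutatorMap] at hzero
  exact (sub_eq_zero.1 hzero.symm).symm

end Bialgebra

variable [HopfAlgebra k H] [IsScalarTower W k H] [FiniteDimensional k H] {π : A →ₐ[W] H}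
  (hπ : IsReduction p π) {Λ : H} (hΛ : IsNormalizedIntegral k Λ)
  (htr : LinearMap.trace k H (antipodeSq k H) ≠ 0) {Δ : A →ₗ[W] A ⊗[W] A}
include hq hpq hk he hπ hΛ htr

theorem exists_sub_smul_of_isMulMod (hΔ : IsComulLift k π q Δ) (hmul : IsMulMod (q * p) Δ) :
    ∃ s, IsComulLift k π (q * p) (Δ - q • s) := by
  have hπ₂ := hπ.mapTensor hk hπ
  obtain ⟨δ, hδ⟩ := mem_multiples.1 (mem_multiples_of_forall_apply_mem hΔ.coassocDefect_mem)
  obtain ⟨ψ, hψ⟩ := hΔ.exists_defect_eq_commutatorMap hq hk he hπ hmul hδ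
  obtain ⟨φ, hφ⟩ := hΛ.exists_commute_sub_cobarDiff₂ htr _ (hΔ.commute_cobarDiff₃ hq hπ hδ hψ)
  obtain ⟨φ', rfl⟩ := hπ₂.surjective φ
  have hs (a : A) : mapTensor k π π (commutatorMap φ' Δ a) =
      commutatorMap (mapTensor k π π φ') comul (π a) := by
    simp [commutatorMap_apply, hΔ.mapTensor_apply]
  have hsq : q * p ∣ q * q := mul_dvd_mul_left q hpq
  refine ⟨commutatorMap φ' Δ, hΔ.mapTensor_sub_smul_apply hk hπ hpq _,
    hmul.sub_smul_commutatorMap hsq φ', fun a ↦ ?_⟩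
  have hdefect : δ a - coassocDefectDeriv Δ (commutatorMap φ' Δ) a ∈ multiples p := by
    refine ((hπ.mapTensor hk hπ₂).apply_eq_zero_iff _).1 ?_
    rw [map_sub, hψ, mapTensor_coassocDefectDeriv hΔ.mapTensor_apply hs,
      coassocDefectDeriv_commutatorMap, commutatorMap_apply, AlgHom.toLinearMap_apply,
      sub_sub_sub_comm, ← sub_mul, ← mul_sub]
    exact sub_eq_zero.2 (hφ (π a)).eq.symm
  rw [coassocDefect_sub_smul, ← hδ, LinearMap.smul_apply, ← smul_sub]
  exact add_mem (smul_mem_multiples_mul hdefect)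
    (multiples_le_of_dvd hsq (smul_mem_multiples _ _))

theorem exists_sub_smul (hΔ : IsComulLift k π q Δ) :
    ∃ s, IsComulLift k π (q * p) (Δ - q • s) := by
  obtain ⟨s, hs⟩ := he.exists_isMulMod_add_smul hq hpq (hπ.mapTensor hk hπ) hΔ.isMulMod
    (by simp [hΔ.mapTensor_apply])
  rw [← sub_neg_eq_add, ← smul_neg q s] at hs
  obtain ⟨t, ht⟩ := (hΔ.sub_smul hk hπ hpq (-s)).exists_sub_smul_of_isMulMod hq hpq hk he hπ hΛ htr
    hs
  exact ⟨-s + t, by rwa [smul_add, ← sub_sub]⟩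

end IsComulLift

end Step

section Complete

variable {W M : Type*} [CommRing W] [AddCommGroup M] [Module W M]

theorem isAdicComplete_of_free_of_finite (I : Ideal W) [IsAdicComplete I W] [Module.Free W M]
    [Module.Finite W M] : IsAdicComplete I M := by
  let b := (Module.Free.chooseBasis W M).equivFun
  let c := (AdicCompletion.congr I b).trans (AdicCompletion.piEquivOfFintype I fun _ ↦ W)
  have hpi : Function.Bijective
      (Pi.map fun _ : Module.Free.ChooseBasisIndex W M ↦ AdicCompletion.of I W) :=
    .piMap fun _ ↦ AdicCompletion.of_bijective I W
  have hcomm : c ∘ AdicCompletion.of I M = Pi.map (fun _ ↦ AdicCompletion.of I W) ∘ b := by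
    ext m i : 2
    simp [c, AdicCompletion.piEquivOfFintype_apply, AdicCompletion.pi]
    rfl
  rw [← AdicCompletion.of_bijective_iff, ← c.bijective.of_comp_iff', hcomm]
  exact hpi.comp b.bijective

variable {p : W}

theorem mem_span_singleton_pow_smul_top {n : ℕ} {x : M} :
    x ∈ (Ideal.span {p} ^ n • ⊤ : Submodule W M) ↔ x ∈ multiples (p ^ n) := by
  simp [Ideal.span_singleton_pow, Submodule.ideal_span_singleton_smul,
    Submodule.mem_smul_pointwise_iff_exists, mem_multiples]

variable [IsAdicComplete (Ideal.span {p}) M]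

theorem eq_zero_of_forall_mem_multiples {x : M} (h : ∀ n, x ∈ multiples (p ^ n)) : x = 0 :=
  IsHausdorff.haus (I := Ideal.span {p}) inferInstance x fun n ↦
    SModEq.zero.2 (mem_span_singleton_pow_smul_top.2 (h n))

theorem exists_limit_of_forall_exists {P : ℕ → M → Prop} (hzero : ∃ x, P 0 x)
    (hsucc : ∀ n x, P n x → ∃ y, P (n + 1) y ∧ x - y ∈ multiples (p ^ n)) :
    ∃ L, ∀ n, ∃ x, P n x ∧ x - L ∈ multiples (p ^ n) := by
  obtain ⟨x₀, hx₀⟩ := hzero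
  choose! next hnext using hsucc
  let f (n : ℕ) : M := Nat.rec x₀ next n
  have hf (n : ℕ) : P n (f n) := by
    induction n with
    | zero => exact hx₀
    | succ n ih => exact (hnext n _ ih).1
  have hcauchy : AdicCompletion.IsAdicCauchy (Ideal.span {p}) M f :=
    (AdicCompletion.isAdicCauchy_iff _ _ _).2 fun n ↦
      SModEq.sub_mem.2 (mem_span_singleton_pow_smul_top.2 (hnext n _ (hf n)).2)
  obtain ⟨L, hL⟩ := IsPrecomplete.prec (I := Ideal.span {p}) inferInstance hcauchy
  exact ⟨L, fun n ↦ ⟨f n, hf n, mem_span_singleton_pow_smul_top.1 (SModEq.sub_mem.1 (hL n))⟩⟩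

end Complete

theorem isUnit_of_one_sub_mem_multiples {W E : Type*} [CommRing W] [Ring E] [Algebra W E]
    [Module.Finite W E] {p : W} (hp : p ∈ (⊥ : Ideal W).jacobson) {u : E}
    (hu : 1 - u ∈ multiples p) : IsUnit u := by
  obtain ⟨m, hm⟩ := hu
  have hm (x : E) : x = u * x + p • (m * x) := by
    rw [← smul_mul_assoc, show p • m = 1 - u from hm, sub_mul, one_mul, add_sub_cancel]
  have hsurj : Function.Surjective (Algebra.lmul W E u) := by
    rw [← LinearMap.range_eq_top, eq_top_iff]
    refine Submodule.le_of_le_smul_of_le_jacobson_bot Module.Finite.fg_top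
      ((Ideal.span_singleton_le_iff_mem _).2 hp) fun x _ ↦ ?_
    rw [hm x]
    exact Submodule.add_mem_sup ⟨x, rfl⟩
      (Submodule.smul_mem_smul (Ideal.mem_span_singleton_self p) trivial)
  exact (Algebra.lmul_isUnit_iff (R := W)).1
    ((Module.End.isUnit_iff _).2 (OrzechProperty.bijective_of_surjective_endomorphism _ hsurj))

section ExistsComul

variable {W k : Type*} [CommRing W] [Field k] [Algebra W k] {A H : Type*} [Ring A] [Algebra W A]
  [Ring H] [Algebra W H]

namespace IsComulLift

section Bialgebra

variable [Bialgebra k H] [IsScalarTower W k H] {π : A →ₐ[W] H}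

theorem of_dvd {q r : W} {Δ : A →ₗ[W] A ⊗[W] A} (hqr : q ∣ r) (hΔ : IsComulLift k π r Δ) :
    IsComulLift k π q Δ where
  mapTensor_apply := hΔ.mapTensor_apply
  isMulMod a b := multiples_le_of_dvd hqr (hΔ.isMulMod a b)
  coassocDefect_mem a := multiples_le_of_dvd hqr (hΔ.coassocDefect_mem a)

variable [Module.Finite W A]

theorem zero_of_forall_pow [Module.Free W A] {p : W} [IsAdicComplete (Ideal.span {p}) W]
    {Δ : A →ₗ[W] A ⊗[W] A} (hΔ : ∀ n, IsComulLift k π (p ^ (n + 1)) Δ) :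
    IsComulLift k π 0 Δ where
  mapTensor_apply := (hΔ 0).mapTensor_apply
  isMulMod a b := by
    have := isAdicComplete_of_free_of_finite (M := A ⊗[W] A) (Ideal.span {p})
    rw [eq_zero_of_forall_mem_multiples (p := p) fun n ↦
      ((hΔ n).of_dvd (pow_dvd_pow p n.le_succ)).isMulMod a b]
    exact zero_mem _
  coassocDefect_mem a := by
    have := isAdicComplete_of_free_of_finite (M := A ⊗[W] (A ⊗[W] A)) (Ideal.span {p})
    rw [eq_zero_of_forall_mem_multiples (p := p) fun n ↦
      ((hΔ n).of_dvd (pow_dvd_pow p n.le_succ)).coassocDefect_mem a]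
    exact zero_mem _

/-- Being multiplicative and `1` modulo `p`, the lift `Δ` sends `1` to an invertible idempotent. -/
theorem exists_algHom {p : W} (hp : p ∈ (⊥ : Ideal W).jacobson)
    (hk : Function.Surjective (algebraMap W k)) (hπ : IsReduction p π) {Δ : A →ₗ[W] A ⊗[W] A}
    (hΔ : IsComulLift k π 0 Δ) : ∃ Δ' : A →ₐ[W] A ⊗[W] A, Δ'.toLinearMap = Δ := by
  have hmul := isMulMod_zero_iff.1 hΔ.isMulMod
  have hone : IsUnit (Δ 1) := isUnit_of_one_sub_mem_multiples hp
    (((hπ.mapTensor hk hπ).apply_eq_zero_iff _).1 (by simp [hΔ.mapTensor_apply]))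
  exact ⟨.ofLinearMap Δ ((IsIdempotentElem.iff_eq_one_of_isUnit hone).1
    ((hmul 1 1).symm.trans (by rw [mul_one]))) hmul, rfl⟩

end Bialgebra

end IsComulLift

variable [HopfAlgebra k H] [IsScalarTower W k H] [FiniteDimensional k H] [IsDomain W]
  [Module.Free W A] [Module.Finite W A] {p : W} [IsAdicComplete (Ideal.span {p}) W]
  {e : A ⊗[W] A} {π : A →ₐ[W] H} {Λ : H}

theorem exists_isComulLift_zero (hp : p ≠ 0) (hk : Function.Surjective (algebraMap W k))
    (he : IsSeparabilityIdempotent W e) (hπ : IsReduction p π) (hΛ : IsNormalizedIntegral k Λ)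
    (htr : LinearMap.trace k H (antipodeSq k H) ≠ 0) :
    ∃ Δ : A →ₗ[W] A ⊗[W] A, IsComulLift k π 0 Δ := by
  have := isAdicComplete_of_free_of_finite (M := A →ₗ[W] A ⊗[W] A) (Ideal.span {p})
  have hpow (n : ℕ) : p ∣ p ^ (n + 1) := dvd_pow_self p n.succ_ne_zero
  obtain ⟨Δ₀, hΔ₀⟩ := Module.projective_lifting_property (mapTensor k π π).toLinearMap
    ((comul (R := k)).restrictScalars W ∘ₗ π.toLinearMap) (hπ.mapTensor hk hπ).surjective
  obtain ⟨Δ, hΔ⟩ := exists_limit_of_forall_exists (p := p)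
    (P := fun n Δ ↦ IsComulLift k π (p ^ (n + 1)) Δ)
    ⟨Δ₀, (zero_add 1).symm ▸ (pow_one p).symm ▸
      .of_mapTensor_apply hk hπ (LinearMap.congr_fun hΔ₀)⟩ fun n Δ hΔ ↦ by
      obtain ⟨s, hs⟩ := hΔ.exists_sub_smul (pow_ne_zero _ hp) (hpow n) hk he hπ hΛ htr
      exact ⟨_, (pow_succ p (n + 1)).symm ▸ hs, by
        simpa using multiples_le_of_dvd (pow_dvd_pow p n.le_succ) (smul_mem_multiples _ s)⟩
  refine ⟨Δ, IsComulLift.zero_of_forall_pow (p := p) fun n ↦ ?_⟩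
  obtain ⟨Δ', hΔ', s, hs⟩ := hΔ (n + 1)
  have hlift := (hΔ'.of_dvd (pow_dvd_pow p (n + 1).le_succ)).sub_smul hk hπ (hpow n) s
  rwa [show p ^ (n + 1) • s = Δ' - Δ from hs, sub_sub_cancel] at hlift

theorem exists_lift_comul (hp : p ≠ 0) (hk : Function.Surjective (algebraMap W k))
    (he : IsSeparabilityIdempotent W e) (hπ : IsReduction p π) (hΛ : IsNormalizedIntegral k Λ)
    (htr : LinearMap.trace k H (antipodeSq k H) ≠ 0) :
    ∃ Δ : A →ₐ[W] A ⊗[W] A, (∀ a, mapTensor k π π (Δ a) = comul (π a)) ∧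
      coassocDefect Δ.toLinearMap = 0 := by
  obtain ⟨Δ, hΔ⟩ := exists_isComulLift_zero hp hk he hπ hΛ htr
  obtain ⟨Δ', rfl⟩ := hΔ.exists_algHom
    (IsAdicComplete.le_jacobson_bot _ (Ideal.mem_span_singleton_self p)) hk hπ
  refine ⟨Δ', hΔ.mapTensor_apply, LinearMap.ext fun a ↦ ?_⟩
  obtain ⟨m, hm⟩ := hΔ.coassocDefect_mem a
  simpa using hm.symm

end ExistsComul

/-! ### Lifting the counit and the antipode -/

section Counit

variable {R M N P Q : Type*} [CommRing R] [AddCommGroup M] [Module R M] [AddCommGroup N]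
  [Module R N] [AddCommGroup P] [Module R P] [AddCommGroup Q] [Module R Q]

theorem apply_contractSnd (f : M →ₗ[R] R) (g : N →ₗ[R] R) (t : M ⊗[R] N) :
    f (contractSnd g t) = g (contractFst f t) := by
  induction t <;> simp_all [mul_comm]

theorem contractFst_contractFst_rTensorAssoc (f : P →ₗ[R] R) (g : Q →ₗ[R] R)
    (Δ : M →ₗ[R] P ⊗[R] Q) (t : M ⊗[R] N) :
    contractFst g (contractFst f (rTensorAssoc Δ N t)) =
      contractFst (g ∘ₗ contractFst f ∘ₗ Δ) t := by
  induction t with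
  | tmul m n =>
    simp only [rTensorAssoc_tmul, contractFst_tmul, LinearMap.comp_apply]
    induction Δ m <;> simp_all [add_tmul, add_smul, mul_smul]
  | _ => simp_all

theorem contractSnd_lTensor (f : P →ₗ[R] R) (g : N →ₗ[R] P) (t : M ⊗[R] N) :
    contractSnd f (g.lTensor M t) = contractSnd (f ∘ₗ g) t := by
  induction t <;> simp_all

theorem contractSnd_comp_contractSnd_rTensorAssoc (f : Q →ₗ[R] R) (g : N →ₗ[R] R)
    (Δ : M →ₗ[R] P ⊗[R] Q) (t : M ⊗[R] N) :
    contractSnd (f ∘ₗ contractSnd g) (rTensorAssoc Δ N t) =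
      contractSnd f (Δ (contractSnd g t)) := by
  induction t with
  | tmul m n =>
    simp only [rTensorAssoc_tmul, contractSnd_tmul, map_smul]
    induction Δ m <;> simp_all [add_tmul, mul_smul]
  | _ => simp_all

variable {Δ : M →ₗ[R] M ⊗[R] M} (hΔ : coassocDefect Δ = 0)
include hΔ

theorem contractFst_comp_contractFst_comp (f g : M →ₗ[R] R) (a : M) :
    contractFst (g ∘ₗ contractFst f ∘ₗ Δ) (Δ a) = contractFst g (Δ (contractFst f (Δ a))) := by
  rw [← contractFst_contractFst_rTensorAssoc, ← contractFst_lTensor f Δ,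
    coassocDefect_eq_zero_iff.1 hΔ]

theorem contractSnd_comp_contractSnd_comp (f g : M →ₗ[R] R) (a : M) :
    contractSnd (f ∘ₗ contractSnd g ∘ₗ Δ) (Δ a) = contractSnd f (Δ (contractSnd g (Δ a))) := by
  rw [← contractSnd_comp_contractSnd_rTensorAssoc, ← LinearMap.comp_assoc, ← contractSnd_lTensor,
    coassocDefect_eq_zero_iff.1 hΔ]

/-- Composing `ε` with the inverses of `a ↦ a₁ ε(a₂)` and `a ↦ ε(a₁) a₂` gives a left and a right
counit, which then agree. -/
theorem exists_counit_of_isUnit {ε : M →ₗ[R] R}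
    (hl : IsUnit (contractFst ε ∘ₗ Δ : Module.End R M))
    (hr : IsUnit (contractSnd ε ∘ₗ Δ : Module.End R M)) :
    ∃ e : M →ₗ[R] R, (∀ a, contractFst e (Δ a) = a) ∧ ∀ a, contractSnd e (Δ a) = a := by
  obtain ⟨l, hl⟩ := hl.exists_left_inv
  obtain ⟨r, hr⟩ := hr.exists_left_inv
  replace hl (a) : l (contractFst ε (Δ a)) = a := LinearMap.congr_fun hl a
  replace hr (a) : r (contractSnd ε (Δ a)) = a := LinearMap.congr_fun hr a
  have hεr : ε ∘ₗ contractFst (ε ∘ₗ r) ∘ₗ Δ = ε := LinearMap.ext fun a ↦ by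
    simp [← apply_contractSnd, hr]
  have hεl : ε ∘ₗ contractSnd (ε ∘ₗ l) ∘ₗ Δ = ε := LinearMap.ext fun a ↦ by
    simp [apply_contractSnd, hl]
  have hfst (a : M) : contractFst (ε ∘ₗ r) (Δ a) = a := by
    rw [← hl (contractFst _ _), ← contractFst_comp_contractFst_comp hΔ, hεr, hl]
  have hsnd (a : M) : contractSnd (ε ∘ₗ l) (Δ a) = a := by
    rw [← hr (contractSnd _ _), ← contractSnd_comp_contractSnd_comp hΔ, hεl, hr]
  have heq : ε ∘ₗ l = ε ∘ₗ r := LinearMap.ext fun a ↦ by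
    simpa [hfst, hsnd] using (apply_contractSnd (ε ∘ₗ r) (ε ∘ₗ l) (Δ a)).symm
  exact ⟨ε ∘ₗ r, hfst, heq ▸ hsnd⟩

end Counit

section Lift

variable {W k : Type*} [CommRing W] [Field k] [Algebra W k] {A B H K : Type*} [Ring A] [Algebra W A]
  [Ring B] [Algebra W B] [Ring H] [Algebra W H] [Ring K] [Algebra W K] {p : W}

section Algebra

variable [Algebra k H] [IsScalarTower W k H] [Algebra k K] [IsScalarTower W k K]

theorem map_contractFst (π : A →ₐ[W] H) (ρ : B →ₐ[W] K) {f : A →ₗ[W] W} {F : H →ₗ[k] k}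
    (h : ∀ a, algebraMap W k (f a) = F (π a)) (t : A ⊗[W] B) :
    ρ (contractFst f t) = contractFst F (mapTensor k π ρ t) := by
  induction t <;> simp_all [← h]

theorem map_contractSnd (π : A →ₐ[W] H) (ρ : B →ₐ[W] K) {f : B →ₗ[W] W} {F : K →ₗ[k] k}
    (h : ∀ b, algebraMap W k (f b) = F (ρ b)) (t : A ⊗[W] B) :
    π (contractSnd f t) = contractSnd F (mapTensor k π ρ t) := by
  induction t <;> simp_all [← h]

end Algebra

variable [Module.Finite W A] (hp : p ∈ (⊥ : Ideal W).jacobson) {π : A →ₐ[W] H}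
  (hπ : IsReduction p π)
include hp hπ

namespace IsReduction

theorem isUnit_of_map_apply [Module.Free W A] {f : Module.End W A} (hf : ∀ a, π (f a) = π a) :
    IsUnit f :=
  isUnit_of_one_sub_mem_multiples hp <| mem_multiples_of_forall_apply_mem fun a ↦
    (hπ.apply_eq_zero_iff _).1 (by simp [hf])

end IsReduction

variable [Module.Free W A] [Bialgebra k H] [IsScalarTower W k H]

theorem exists_lift_counit (hk : IsReduction p (Algebra.ofId W k)) {Δ : A →ₗ[W] A ⊗[W] A}
    (hcomul : ∀ a, mapTensor k π π (Δ a) = comul (π a)) (hΔ : coassocDefect Δ = 0) :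
    ∃ e : A →ₗ[W] W, (∀ a, algebraMap W k (e a) = counit (R := k) (π a)) ∧
      (∀ a, contractFst e (Δ a) = a) ∧ ∀ a, contractSnd e (Δ a) = a := by
  obtain ⟨ε, hε⟩ := Module.projective_lifting_property (Algebra.linearMap W k)
    ((counit (R := k) (A := H)).restrictScalars W ∘ₗ π.toLinearMap) hk.surjective
  replace hε (a : A) : algebraMap W k (ε a) = counit (R := k) (π a) := LinearMap.congr_fun hε a
  have hl (a : A) : π (contractFst ε (Δ a)) = π a := by
    rw [map_contractFst π π hε, hcomul]
    simp [contractFst]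
  have hr (a : A) : π (contractSnd ε (Δ a)) = π a := by
    rw [map_contractSnd π π hε, hcomul]
    simp [contractSnd]
  obtain ⟨e, hfst, hsnd⟩ := exists_counit_of_isUnit hΔ (hπ.isUnit_of_map_apply hp hl)
    (hπ.isUnit_of_map_apply hp hr)
  refine ⟨e, fun a ↦ ?_, hfst, hsnd⟩
  have hmem := map_mem_multiples e (hπ.map_eq_map_iff.1 (hr a))
  rw [map_sub, apply_contractSnd, hfst] at hmem
  exact (hk.map_eq_map_iff.2 hmem).symm.trans (hε a)

end Lift

section CoalgebraLift

variable {W k A H : Type*} [CommRing W] [Field k] [Algebra W k] [Ring A] [Algebra W A]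
  [Coalgebra W A] [Ring H] [Algebra k H] [Coalgebra k H] [Algebra W H] [IsScalarTower W k H]

variable (k) in
/-- `π` is compatible with the coalgebra structures of `A` over `W` and of `H` over `k`, so that
the former lifts the latter. -/
structure IsCoalgebraLift (π : A →ₐ[W] H) : Prop where
  algebraMap_counit (a : A) : algebraMap W k (counit (R := W) a) = counit (R := k) (π a)
  mapTensor_comul (a : A) : mapTensor k π π (comul a) = comul (π a)

namespace IsCoalgebraLift

variable {π : A →ₐ[W] H} (hπ : IsCoalgebraLift k π)
include hπ

theorem toConv_comp_mul_toConv_comp (f g : H →ₗ[k] H) :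
    toConv (f.restrictScalars W ∘ₗ π.toLinearMap) * toConv (g.restrictScalars W ∘ₗ π.toLinearMap) =
      toConv ((toConv f * toConv g).ofConv.restrictScalars W ∘ₗ π.toLinearMap) := by
  ext a
  simp only [LinearMap.convMul_apply, LinearMap.comp_apply,
    LinearMap.restrictScalars_apply, AlgHom.toLinearMap_apply, ← hπ.mapTensor_comul]
  induction comul (R := W) a <;> simp_all

theorem toConv_one_comp :
    toConv ((1 : WithConv (H →ₗ[k] H)).ofConv.restrictScalars W ∘ₗ π.toLinearMap) = 1 := by
  ext a
  simp [LinearMap.convOne_def, ← hπ.algebraMap_counit, ← IsScalarTower.algebraMap_apply]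

end IsCoalgebraLift

end CoalgebraLift

section ConvolutionUnit

variable {W A C K : Type*} [CommRing W] [Ring A] [Algebra W A] [Module.Finite W A]
  [AddCommGroup C] [Module W C] [Coalgebra W C] [Module.Free W C] [Module.Finite W C]
  [Ring K] [Algebra W K] {p : W}

theorem IsReduction.isUnit_of_toConv_comp_eq_one [Module.Free W A] (hp : p ∈ (⊥ : Ideal W).jacobson)
    {π : A →ₐ[W] K} (hπ : IsReduction p π) {u : WithConv (C →ₗ[W] A)}
    (hu : toConv (π.toLinearMap ∘ₗ u.ofConv) = 1) : IsUnit u := by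
  have : Module.Finite W (WithConv (C →ₗ[W] A)) :=
    Module.Finite.equiv (WithConv.linearEquiv W (C →ₗ[W] A)).symm
  refine isUnit_of_one_sub_mem_multiples hp <|
    map_mem_multiples (WithConv.linearEquiv W (C →ₗ[W] A)).symm.toLinearMap <|
      mem_multiples_of_forall_apply_mem (f := (1 - u).ofConv) fun c ↦ hπ.map_eq_map_iff.1 ?_
  simpa [LinearMap.convOne_def] using congr($hu.symm c)

end ConvolutionUnit

section LiftCounit

variable {W A : Type*} [CommRing W] [Ring A] [Algebra W A] [Coalgebra W A]

theorem isIdempotentElem_toConv_counit_comp {C : Type*} [AddCommGroup C] [Module W C]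
    [Coalgebra W C] {f : C →ₗ[W] A} (hf : ∀ c, comul (f c) = map f f (comul (R := W) c)) :
    IsIdempotentElem (toConv (counit (R := W) ∘ₗ f)) := by
  ext c
  have h := congr(LinearMap.mul' W W (counit.lTensor W $(rTensor_counit_comul (R := W) (f c))))
  rw [hf] at h
  simp only [LinearMap.convMul_apply, LinearMap.comp_apply]
  rw [← one_mul (counit (f c)), ← LinearMap.mul'_apply (R := W), ← LinearMap.lTensor_tmul, ← h]
  induction comul (R := W) c <;> simp_all

variable {k H : Type*} [Field k] [Algebra W k] [Ring H] [Bialgebra k H] [Algebra W H]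
  [IsScalarTower W k H] {p : W} (hp : p ∈ (⊥ : Ideal W).jacobson)
  (hk : IsReduction p (Algebra.ofId W k)) {π : A →ₐ[W] H} (hπ : IsCoalgebraLift k π)
include hp hk hπ

theorem IsCoalgebraLift.counit_one (h : comul (R := W) (1 : A) = 1) :
    counit (R := W) (1 : A) = 1 := by
  have hidem : IsIdempotentElem (counit (R := W) (1 : A)) := by
    have h1 := rTensor_counit_comul (R := W) (1 : A)
    rw [h, Algebra.TensorProduct.one_def, LinearMap.rTensor_tmul] at h1
    simpa [IsIdempotentElem] using congr(LinearMap.mul' W W (counit.lTensor W $h1))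
  refine (IsIdempotentElem.iff_eq_one_of_isUnit <| isUnit_of_one_sub_mem_multiples hp ?_).1 hidem
  refine hk.map_eq_map_iff.1 ?_
  simpa using (hπ.algebraMap_counit 1).symm

theorem IsCoalgebraLift.counit_mul [Module.Free W A] [Module.Finite W A]
    (h : ∀ a b : A, comul (R := W) (a * b) = comul a * comul b) (a b : A) :
    counit (R := W) (a * b) = counit a * counit b := by
  have hidem : IsIdempotentElem (toConv (counit (R := W) ∘ₗ LinearMap.mul' W A)) :=
    isIdempotentElem_toConv_counit_comp fun t ↦ by
      induction t with
      | tmul a b => simpa [← (ℛ W a).eq, ← (ℛ W b).eq, h, Finset.sum_mul_sum, sum_tmul, tmul_sum]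
          using Finset.sum_comm
      | _ => simp_all
  have hunit := hk.isUnit_of_toConv_comp_eq_one hp
    (u := toConv (counit (R := W) ∘ₗ LinearMap.mul' W A)) <| by
      ext a b
      simp [LinearMap.convOne_def, Algebra.ofId_apply, hπ.algebraMap_counit, mul_comm]
  simpa [LinearMap.convOne_def, mul_comm] using
    congr($((IsIdempotentElem.iff_eq_one_of_isUnit hunit).1 hidem) (a ⊗ₜ b))

end LiftCounit

section LiftAntipode

variable {W k A H : Type*} [CommRing W] [Field k] [Algebra W k] [Ring A] [Ring H]
  [HopfAlgebra k H] [Algebra W H] [IsScalarTower W k H]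

/-- Modulo `p`, a linear lift of the antipode of `H` is a convolution inverse of the identity. -/
theorem IsCoalgebraLift.isUnit_toConv_id [Bialgebra W A] [Module.Free W A] [Module.Finite W A]
    {p : W} (hp : p ∈ (⊥ : Ideal W).jacobson) {π : A →ₐ[W] H} (hπ : IsCoalgebraLift k π)
    (hred : IsReduction p π) : IsUnit (toConv (LinearMap.id : A →ₗ[W] A)) := by
  obtain ⟨S, hS⟩ := Module.projective_lifting_property π.toLinearMap
    ((antipode k (A := H)).restrictScalars W ∘ₗ π.toLinearMap) hred.surjective
  have hmul (f g : WithConv (A →ₗ[W] A)) : toConv (π.toLinearMap ∘ₗ (f * g).ofConv) =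
      toConv (π.toLinearMap ∘ₗ f.ofConv) * toConv (π.toLinearMap ∘ₗ g.ofConv) := by
    rw [LinearMap.algHom_comp_convMul_distrib, toConv_ofConv]
  have hid : π.toLinearMap ∘ₗ LinearMap.id =
    (LinearMap.id : H →ₗ[k] H).restrictScalars W ∘ₗ π.toLinearMap := rfl
  rw [isUnit_iff_exists_and_exists]
  obtain ⟨r, hr⟩ := (hred.isUnit_of_toConv_comp_eq_one hp (u := toConv .id * toConv S) <| by
    rw [hmul, ofConv_toConv, ofConv_toConv, hS, hid, hπ.toConv_comp_mul_toConv_comp,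
      LinearMap.id_mul_antipode, hπ.toConv_one_comp]).exists_right_inv
  obtain ⟨l, hl⟩ := (hred.isUnit_of_toConv_comp_eq_one hp (u := toConv S * toConv .id) <| by
    rw [hmul, ofConv_toConv, ofConv_toConv, hS, hid, hπ.toConv_comp_mul_toConv_comp,
      LinearMap.antipode_mul_id, hπ.toConv_one_comp]).exists_left_inv
  exact ⟨⟨toConv S * r, by rw [← mul_assoc, hr]⟩, l * toConv S, by rw [mul_assoc, hl]⟩

theorem IsCoalgebraLift.map_antipode [HopfAlgebra W A] {π : A →ₐ[W] H}
    (hπ : IsCoalgebraLift k π) (a : A) : π (antipode W a) = antipode k (π a) := by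
  have h := hπ.toConv_comp_mul_toConv_comp .id (antipode k)
  rw [LinearMap.id_mul_antipode, hπ.toConv_one_comp] at h
  exact congr($(left_inv_eq_right_inv (algHom_comp_antipode_convMul π) h) a)

theorem IsCoalgebraLift.map_antipodeSq [HopfAlgebra W A] {π : A →ₐ[W] H}
    (hπ : IsCoalgebraLift k π) (a : A) : π (antipodeSq W A a) = antipodeSq k H (π a) := by
  simp only [antipodeSq_apply, hπ.map_antipode]

end LiftAntipode

section Trace

variable {W k A H : Type*} [CommRing W] [Field k] [Algebra W k] [Ring A] [Algebra W A]
  [Ring H] [Algebra k H] [Algebra W H] [IsScalarTower W k H] {p : W}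
  (hk : IsReduction p (Algebra.ofId W k)) {π : A →ₐ[W] H} (hπ : IsReduction p π)
include hk hπ

theorem IsReduction.bijective_liftBaseChange :
    Function.Bijective (π.toLinearMap.liftBaseChange k) := by
  have hp : algebraMap W k p = 0 := hk.apply_eq_zero_of_dvd dvd_rfl ⟨1, by simp⟩
  refine ⟨(injective_iff_map_eq_zero _).2 fun t ht ↦ ?_, fun h ↦ ?_⟩
  · obtain ⟨a, rfl⟩ := mk_surjective W A k hk.surjective t
    obtain ⟨m, rfl⟩ := (hπ.apply_eq_zero_iff a).1 (by simpa using ht)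
    rw [mk_apply, LinearMap.lsmul_apply, ← smul_tmul, ← Algebra.algebraMap_eq_smul_one, hp,
      zero_tmul]
  · obtain ⟨a, rfl⟩ := hπ.surjective h
    exact ⟨1 ⊗ₜ a, by simp⟩

theorem IsReduction.algebraMap_trace [Module.Free W A] [Module.Finite W A] {f : A →ₗ[W] A}
    {F : H →ₗ[k] H} (h : ∀ a, π (f a) = F (π a)) :
    algebraMap W k (LinearMap.trace W A f) = LinearMap.trace k H F := by
  let e := LinearEquiv.ofBijective _ (hk.bijective_liftBaseChange hπ)
  rw [← LinearMap.trace_baseChange, ← LinearMap.trace_conj' _ e]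
  congr 1
  ext x
  obtain ⟨t, rfl⟩ := e.surjective x
  rw [LinearEquiv.conj_apply_apply, e.symm_apply_apply]
  induction t <;> simp_all [e]

end Trace

/-! ### Split semisimple algebras -/

section SplitSemisimple

variable {W : Type*} [CommRing W]

namespace IsSeparabilityIdempotent

theorem exists_isNormalizedIntegral {A : Type*} [Ring A] [Bialgebra W A] {e : A ⊗[W] A}
    (he : IsSeparabilityIdempotent W e) : ∃ Λ : A, IsNormalizedIntegral W Λ := by
  have hleft (a : A) (t : A ⊗[W] A) : contractFst (counit (R := W)) ((a ⊗ₜ 1) * t) =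
      counit (R := W) a • contractFst (counit (R := W)) t := by
    induction t <;> simp_all [mul_add, mul_smul]
  have hcounit (t : A ⊗[W] A) :
      counit (R := W) (contractFst (counit (R := W)) t) = counit (LinearMap.mul' W A t) := by
    induction t <;> simp_all
  exact ⟨contractFst counit e, fun a ↦ by rw [← contractFst_mul_one_tmul, ← he.tmul_one_mul, hleft],
    by rw [hcounit, he.mul'_eq_one, Bialgebra.counit_one]⟩

theorem mapTensor {k A H : Type*} [Field k] [Algebra W k] [Ring A] [Algebra W A] [Ring H]
    [Algebra k H] [Algebra W H] [IsScalarTower W k H] {π : A →ₐ[W] H} (hπ : Function.Surjective π)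
    {e : A ⊗[W] A} (he : IsSeparabilityIdempotent W e) :
    IsSeparabilityIdempotent k (mapTensor k π π e) where
  mul'_eq_one := by
    have hmul (t : A ⊗[W] A) :
        LinearMap.mul' k H (KaplanskySeventh.mapTensor k π π t) = π (LinearMap.mul' W A t) := by
      induction t <;> simp_all
    rw [hmul, he.mul'_eq_one, map_one]
  tmul_one_mul := hπ.forall.2 fun a ↦ by
    simpa using congr(KaplanskySeventh.mapTensor k π π $(he.tmul_one_mul a))

theorem matrix {ι : Type*} [Fintype ι] [DecidableEq ι] (i : ι) :
    IsSeparabilityIdempotent W (A := Matrix ι ι W)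
      (∑ j, Matrix.single j i 1 ⊗ₜ Matrix.single i j 1) where
  mul'_eq_one := by simp [Matrix.sum_single_one]
  tmul_one_mul a := by
    have hleft (j : ι) : a * Matrix.single j i 1 = ∑ l, a l j • Matrix.single l i (1 : W) := by
      ext; simp [Matrix.mul_apply, Matrix.single_apply, Matrix.sum_apply, ite_and]
    have hright (j : ι) : Matrix.single i j 1 * a = ∑ l, a j l • Matrix.single i l (1 : W) := by
      ext m; by_cases hm : i = m <;>
        simp [Matrix.mul_apply, Matrix.single_apply, Matrix.sum_apply, hm]
    simp only [Finset.mul_sum, Finset.sum_mul, Algebra.TensorProduct.tmul_mul_tmul, one_mul,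
      mul_one, hleft, hright, sum_tmul, tmul_sum, smul_tmul]
    exact Finset.sum_comm

theorem pi {ι : Type*} [Fintype ι] [DecidableEq ι] {A : ι → Type*} [∀ i, Ring (A i)]
    [∀ i, Algebra W (A i)] {e : ∀ i, A i ⊗[W] A i} (he : ∀ i, IsSeparabilityIdempotent W (e i)) :
    IsSeparabilityIdempotent W
      (∑ i, map (LinearMap.single W A i) (LinearMap.single W A i) (e i)) where
  mul'_eq_one := by
    have hmul (i : ι) (t : A i ⊗[W] A i) : LinearMap.mul' W (∀ i, A i)
        (map (LinearMap.single W A i) (LinearMap.single W A i) t) =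
          Pi.single i (LinearMap.mul' W (A i) t) := by
      induction t <;> simp_all [Pi.single_add, Pi.single_mul]
    simp only [map_sum, hmul, (he _).mul'_eq_one]
    exact Finset.univ_sum_single 1
  tmul_one_mul a := by
    have hleft (i : ι) (t : A i ⊗[W] A i) :
        (a ⊗ₜ 1) * map (LinearMap.single W A i) (LinearMap.single W A i) t =
          map (LinearMap.single W A i) (LinearMap.single W A i) ((a i ⊗ₜ 1) * t) := by
      induction t <;> simp_all [mul_add, ← Pi.single_mul_right]
    have hright (i : ι) (t : A i ⊗[W] A i) :
        map (LinearMap.single W A i) (LinearMap.single W A i) t * (1 ⊗ₜ a) =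
          map (LinearMap.single W A i) (LinearMap.single W A i) (t * (1 ⊗ₜ a i)) := by
      induction t <;> simp_all [add_mul, ← Pi.single_mul_left]
    simp only [Finset.mul_sum, Finset.sum_mul, hleft, hright, (he _).tmul_one_mul]

end IsSeparabilityIdempotent

theorem exists_isSeparabilityIdempotent_pi_matrix {ι : Type*} [Finite ι] (d : ι → ℕ)
    [∀ i, NeZero (d i)] :
    ∃ e, IsSeparabilityIdempotent W (A := ∀ i, Matrix (Fin (d i)) (Fin (d i)) W) e := by
  classical
  have := Fintype.ofFinite ι
  exact ⟨_, .pi fun i ↦ .matrix (0 : Fin (d i))⟩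

namespace IsReduction

variable {A H : Type*} [Ring A] [Algebra W A] [Ring H] [Algebra W H] {p : W} {π : A →ₐ[W] H}

theorem mapMatrix (hπ : IsReduction p π) (n : Type*) [Fintype n] [DecidableEq n] :
    IsReduction p (π.mapMatrix : Matrix n n A →ₐ[W] Matrix n n H) where
  surjective M := by
    choose f hf using hπ.surjective
    exact ⟨M.map f, by ext; simp [hf]⟩
  apply_eq_zero_iff M := by
    refine ⟨fun h ↦ ?_, ?_⟩
    · choose m hm using fun i j ↦ (hπ.apply_eq_zero_iff (M i j)).1 congr($h i j)
      exact ⟨m, Matrix.ext hm⟩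
    · rintro ⟨M, rfl⟩
      ext i j
      exact (hπ.apply_eq_zero_iff _).2 (smul_mem_multiples p (M i j))

theorem pi {ι : Type*} {A H : ι → Type*} [∀ i, Ring (A i)] [∀ i, Algebra W (A i)]
    [∀ i, Ring (H i)] [∀ i, Algebra W (H i)] {π : ∀ i, A i →ₐ[W] H i}
    (hπ : ∀ i, IsReduction p (π i)) :
    IsReduction p (AlgHom.pi fun i ↦ (π i).comp (Pi.evalAlgHom W A i)) where
  surjective h := by
    choose a ha using fun i ↦ (hπ i).surjective (h i)
    exact ⟨a, funext ha⟩
  apply_eq_zero_iff a := by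
    refine ⟨fun h ↦ ?_, ?_⟩
    · choose m hm using fun i ↦ ((hπ i).apply_eq_zero_iff (a i)).1 congr($h i)
      exact ⟨m, funext hm⟩
    · rintro ⟨m, rfl⟩
      exact funext fun i ↦ ((hπ i).apply_eq_zero_iff _).2 (smul_mem_multiples p (m i))

theorem algEquiv_comp {K : Type*} [Ring K] [Algebra W K] (hπ : IsReduction p π) (φ : H ≃ₐ[W] K) :
    IsReduction p (φ.toAlgHom.comp π) :=
  ⟨φ.surjective.comp hπ.surjective, fun a ↦
    (map_eq_zero_iff φ φ.injective).trans (hπ.apply_eq_zero_iff a)⟩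

end IsReduction

end SplitSemisimple

/-! ### Descent from characteristic zero -/

section Descent

variable {W k A H : Type*} [CommRing W] [IsDomain W] [CharZero W] [Field k] [Algebra W k]
  [Ring A] [Ring H] [HopfAlgebra k H] [Algebra W H] [IsScalarTower W k H]
  {p : W} (hk : IsReduction p (Algebra.ofId W k))
include hk

theorem antipodeSq_eq_one_of_isCoalgebraLift [HopfAlgebra W A] [Module.Free W A]
    [Module.Finite W A] {e : A ⊗[W] A} (he : IsSeparabilityIdempotent W e) {π : A →ₐ[W] H}
    (hred : IsReduction p π) (hπ : IsCoalgebraLift k π)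
    (htr : LinearMap.trace k H (antipodeSq k H) ≠ 0) : antipodeSq k H = 1 := by
  obtain ⟨Λ, hΛ⟩ := he.exists_isNormalizedIntegral
  have htrA : LinearMap.trace W A (antipodeSq W A) ≠ 0 := fun h ↦ htr <| by
    rw [← hk.algebraMap_trace hred hπ.map_antipodeSq, h, map_zero]
  refine LinearMap.ext <| hred.surjective.forall.2 fun a ↦ ?_
  rw [← hπ.map_antipodeSq, antipodeSq_eq_one_of_charZero hΛ htrA]
  rfl

theorem antipodeSq_eq_one_of_isReduction [FiniteDimensional k H] [IsAdicComplete (Ideal.span {p}) W]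
    (hp : p ≠ 0) [Algebra W A] [Module.Free W A] [Module.Finite W A] {e : A ⊗[W] A}
    (he : IsSeparabilityIdempotent W e) {π : A →ₐ[W] H} (hred : IsReduction p π)
    (htr : LinearMap.trace k H (antipodeSq k H) ≠ 0) : antipodeSq k H = 1 := by
  have hjac : p ∈ (⊥ : Ideal W).jacobson :=
    IsAdicComplete.le_jacobson_bot _ (Ideal.mem_span_singleton_self p)
  obtain ⟨Λ, hΛ⟩ := (he.mapTensor (k := k) hred.surjective).exists_isNormalizedIntegral
  obtain ⟨Δ, hcomul, hcoassoc⟩ := exists_lift_comul hp hk.surjective he hred hΛ htr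
  obtain ⟨ε, hcounit, hfst, hsnd⟩ := exists_lift_counit hjac hred hk hcomul hcoassoc
  let _ : Coalgebra W A :=
    { comul := Δ.toLinearMap
      counit := ε
      coassoc := LinearMap.ext fun a ↦ (coassocDefect_eq_zero_iff.1 hcoassoc a).symm
      rTensor_counit_comp_comul := LinearMap.ext fun a ↦ (TensorProduct.lid W A).injective <|
        (hfst a).trans (by simp)
      lTensor_counit_comp_comul := LinearMap.ext fun a ↦ (TensorProduct.rid W A).injective <|
        (hsnd a).trans (by simp) }
  have hπ : IsCoalgebraLift k π := ⟨hcounit, hcomul⟩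
  let _ : Bialgebra W A := Bialgebra.mk' W A (hπ.counit_one hjac hk (map_one Δ))
    (fun {a b} ↦ hπ.counit_mul hjac hk (map_mul Δ) a b) (map_one Δ) (fun {a b} ↦ map_mul Δ a b)
  obtain ⟨S, hS⟩ := hπ.isUnit_toConv_id hjac hred
  let _ : HopfAlgebra W A := HopfAlgebra.ofConvInverse (S⁻¹).val.ofConv
    (by rw [toConv_ofConv, ← hS, S.inv_mul]) (by rw [toConv_ofConv, ← hS, S.mul_inv])
  exact antipodeSq_eq_one_of_isCoalgebraLift hk he hred hπ htr

end Descent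

section WittVector

variable (p : ℕ) [Fact p.Prime] (k : Type*) [Field k] [CharP k p]

theorem charZero_wittVector : CharZero (WittVector p k) := by
  refine (CharZero.charZero_iff_forall_prime_ne_zero _).2 fun q hq h0 ↦ ?_
  have hqk : (q : k) = 0 := by simpa using congr(WittVector.constantCoeff $h0)
  obtain rfl := (Nat.prime_dvd_prime_iff_eq Fact.out hq).1 ((CharP.cast_eq_zero_iff k p q).1 hqk)
  exact WittVector.p_nonzero p k h0

theorem isReduction_constantCoeff [PerfectRing k p] [Algebra (WittVector p k) k]
    (h : algebraMap (WittVector p k) k = WittVector.constantCoeff) :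
    IsReduction (p : WittVector p k) (Algebra.ofId (WittVector p k) k) where
  surjective w := by simpa [Algebra.ofId_apply, h] using WittVector.constantCoeff_surjective p w
  apply_eq_zero_iff w := by
    rw [Algebra.ofId_apply, h, ← RingHom.mem_ker, WittVector.ker_constantCoeff,
      Ideal.mem_span_singleton']
    simp [mem_multiples, mul_comm]

end WittVector

section AlgClosed

variable {k H : Type*} [Field k] [IsAlgClosed k] [Ring H] [HopfAlgebra k H] [FiniteDimensional k H]
  [IsSemisimpleRing H] (htr : LinearMap.trace k H (antipodeSq k H) ≠ 0)
include htr

theorem antipodeSq_eq_one_of_isSemisimpleRing_of_charZero [CharZero k] : antipodeSq k H = 1 := by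
  obtain ⟨n, d, _, ⟨φ⟩⟩ := IsSemisimpleRing.exists_algEquiv_pi_matrix_of_isAlgClosed k H
  obtain ⟨e, he⟩ := exists_isSeparabilityIdempotent_pi_matrix (W := k) d
  obtain ⟨Λ, hΛ⟩ := (he.mapTensor (k := k) (π := φ.symm.toAlgHom)
    φ.symm.surjective).exists_isNormalizedIntegral
  exact antipodeSq_eq_one_of_charZero hΛ htr

theorem antipodeSq_eq_one_of_isSemisimpleRing_of_charP (p : ℕ) [Fact p.Prime] [CharP k p] :
    antipodeSq k H = 1 := by
  have := charZero_wittVector p k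
  let _ : Algebra (WittVector p k) k := (WittVector.constantCoeff (p := p)).toAlgebra
  let _ : Algebra (WittVector p k) H := Algebra.compHom H (algebraMap (WittVector p k) k)
  have : IsScalarTower (WittVector p k) k H := .of_algebraMap_eq fun _ ↦ rfl
  have hk := isReduction_constantCoeff p k rfl
  obtain ⟨n, d, _, ⟨φ⟩⟩ := IsSemisimpleRing.exists_algEquiv_pi_matrix_of_isAlgClosed k H
  obtain ⟨e, he⟩ := exists_isSeparabilityIdempotent_pi_matrix (W := WittVector p k) d
  have hπ := IsReduction.pi fun i ↦ hk.mapMatrix (Fin (d i))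
  exact antipodeSq_eq_one_of_isReduction hk (WittVector.p_nonzero p k) he
    (hπ.algEquiv_comp (φ.symm.restrictScalars (WittVector p k))) htr

end AlgClosed

end KaplanskySeventh

/-- (Kaplansky's 7th conjecture) Let `H` be a finite-dimensional Hopf algebra over an
algebraically closed field `k` which is semisimple as a ring and whose antipode `S`
satisfies `tr(S²) ≠ 0` (equivalently, `H` is also cosemisimple). Then `S ∘ S` is the
identity map of `H`. -/
theorem kaplansky_seventh (k H : Type) [Field k] [IsAlgClosed k] [Ring H]
    [HopfAlgebra k H] [FiniteDimensional k H] [IsSemisimpleRing H]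
    (htr : LinearMap.trace k H
      ((HopfAlgebra.antipode (R := k) (A := H)).comp (HopfAlgebra.antipode (R := k) (A := H)))
        ≠ 0) :
    ∀ x : H, HopfAlgebra.antipode (R := k) (HopfAlgebra.antipode (R := k) x) = x := by
  suffices h : KaplanskySeventh.antipodeSq k H = 1 from LinearMap.congr_fun h
  obtain ⟨p, _⟩ := CharP.exists k
  obtain hp | rfl := CharP.char_is_prime_or_zero k p
  · have := Fact.mk hp
    exact KaplanskySeventh.antipodeSq_eq_one_of_isSemisimpleRing_of_charP htr p
  · have := CharP.charP_to_charZero k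
    exact KaplanskySeventh.antipodeSq_eq_one_of_isSemisimpleRing_of_charZero htr
end

section
/- (Nichols–Zoeller divisibility for Hopf quotients) Let k be a field, let A and B be finite-dimensional Hopf algebras over k, and let f : A → B be a surjective bialgebra homomorphism (so B is a quotient of A by a Hopf ideal). Then dim_k B divides dim_k A. -/
/-!
The algebra `B*` embeds in `A*`, which makes `A*` a `B*`-module. Choose a simple `B*`-module `V`
maximizing the ratio `dim Hom(A*, V) / dim V = t / n`; Nakayama's lemma then gives a surjection
`(B*)ᵗ → (A*)ⁿ`. The space `W = Hom(A, V)` is a faithful `B*`-module for the action twisted by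
translations, and the antipode shows that `Hom(A, Hom(A*, V))` embeds in `Hom(A*, W)`. Hence
`t * dim W ≤ n * dim Hom(A*, W)`, so every map `(B*)ᵗ → W` factors through `(A*)ⁿ`, and faithfulness
of `W` makes the surjection an isomorphism. Comparing maps to the trivial module `k` gives
`t = n * dim Hom(A*, k)`, so `dim A = dim Hom(A*, k) * dim B`.
-/

/-! ### Modules over a finite-dimensional algebra -/

section ModuleTheory

open Module

section Ring

variable {R M N : Type*} [Ring R] [AddCommGroup M] [Module R M] [AddCommGroup N] [Module R N]

lemma surjective_of_surjective_mkQ_jacobson_comp [Module.Finite R N] {φ : M →ₗ[R] N}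
    (h : Function.Surjective ((jacobson R N).mkQ ∘ₗ φ)) : Function.Surjective φ := by
  have hsup : LinearMap.range φ ⊔ jacobson R N = ⊤ := by
    rw [sup_comm, ← Submodule.comap_map_mkQ, ← LinearMap.range_comp,
      LinearMap.range_eq_top.mpr h, Submodule.comap_top]
  by_contra hφ
  obtain ⟨L, hL, hφL⟩ := (eq_top_or_exists_le_coatom (LinearMap.range φ)).resolve_left
    (mt LinearMap.range_eq_top.mp hφ)
  exact hL.1 (top_le_iff.mp (hsup.ge.trans (sup_le hφL (sInf_le hL))))

lemma nontrivial_hom_of_surjective [Nontrivial N] {p : M →ₗ[R] N} (hp : Function.Surjective p) :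
    Nontrivial (M →ₗ[R] N) := by
  obtain ⟨y, hy⟩ := exists_ne (0 : N)
  obtain ⟨x, rfl⟩ := hp y
  exact ⟨p, 0, fun h => hy (by rw [h, LinearMap.zero_apply])⟩

lemma exists_surjective_quotient_isMaximal [Module.Finite R M] [Nontrivial M] :
    ∃ m : Ideal R, m.IsMaximal ∧ ∃ p : M →ₗ[R] R ⧸ m, Function.Surjective p := by
  obtain ⟨L, hL, -⟩ := (eq_top_or_exists_le_coatom (⊥ : Submodule R M)).resolve_left bot_ne_top
  obtain ⟨m, hm, ⟨e⟩⟩ := isSimpleModule_iff_quot_maximal.mp (isSimpleModule_iff_isCoatom.mpr hL)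
  exact ⟨m, hm, e.toLinearMap ∘ₗ L.mkQ, e.surjective.comp L.mkQ_surjective⟩

lemma nonempty_equiv_ker_prod [IsSemisimpleModule R M] {p : M →ₗ[R] N}
    (hp : Function.Surjective p) : Nonempty (M ≃ₗ[R] LinearMap.ker p × N) := by
  obtain ⟨s, hs⟩ := IsSemisimpleModule.lifting_property p hp LinearMap.id
  exact ⟨(p.exact_subtype_ker_map.splitSurjectiveEquiv (Submodule.injective_subtype _)
    ⟨s, hs⟩).1⟩

end Ring

variable {k R : Type*} [Field k] [Ring R] [Algebra k R]
variable {M N V : Type*}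

section HomDimension

variable [AddCommGroup M] [Module R M] [AddCommGroup N] [Module R N]
  [AddCommGroup V] [Module k V] [Module R V] [IsScalarTower k R V]

instance finite_ker [Module k M] [IsScalarTower k R M] [Module.Finite k M] (g : M →ₗ[R] N) :
    Module.Finite k (LinearMap.ker g) :=
  .of_injective ((LinearMap.ker g).subtype.restrictScalars k) (Submodule.injective_subtype _)

lemma finrank_hom_congr_left (e : M ≃ₗ[R] N) :
    finrank k (M →ₗ[R] V) = finrank k (N →ₗ[R] V) :=
  (LinearEquiv.congrLeft V k e).finrank_eq

lemma finrank_hom_quotient_jacobson [IsSemisimpleModule R V] :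
    finrank k ((M ⧸ jacobson R M) →ₗ[R] V) = finrank k (M →ₗ[R] V) := by
  refine (LinearEquiv.ofBijective (LinearMap.lcomp k V (jacobson R M).mkQ) ⟨?_, ?_⟩).finrank_eq
  · exact fun _ _ h => (LinearMap.cancel_right (Submodule.mkQ_surjective _)).mp h
  · intro g
    have hker : jacobson R M ≤ LinearMap.ker g := by
      simpa only [IsSemisimpleModule.jacobson_eq_bot] using! le_comap_jacobson g
    exact ⟨(jacobson R M).liftQ g hker, Submodule.liftQ_mkQ _ g hker⟩

end HomDimension

variable [AddCommGroup M] [Module k M] [Module R M] [IsScalarTower k R M]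
  [AddCommGroup N] [Module k N] [Module R N] [IsScalarTower k R N]
  [AddCommGroup V] [Module k V] [Module R V] [IsScalarTower k R V]

instance finite_hom [Module.Finite k M] [Module.Finite k V] : Module.Finite k (M →ₗ[R] V) :=
  .of_injective (LinearMap.restrictScalarsₗ k R M V k) (LinearMap.restrictScalars_injective k)

lemma finrank_hom_le_finrank_mul_finrank [Module.Finite k M] [Module.Finite k V] :
    finrank k (M →ₗ[R] V) ≤ finrank k M * finrank k V :=
  (LinearMap.finrank_le_finrank_of_injective (f := LinearMap.restrictScalarsₗ k R M V k)
    (LinearMap.restrictScalars_injective k)).trans_eq (finrank_linearMap ..)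

lemma finrank_hom_prod [Module.Finite k M] [Module.Finite k N] [Module.Finite k V] :
    finrank k (M × N →ₗ[R] V) = finrank k (M →ₗ[R] V) + finrank k (N →ₗ[R] V) := by
  rw [← (LinearMap.coprodEquiv (R := R) (M := M) (M₂ := N) (M₃ := V) k).finrank_eq, finrank_prod]

lemma finrank_hom_pi (n : ℕ) [Module.Finite k M] [Module.Finite k V] :
    finrank k ((Fin n → M) →ₗ[R] V) = n * finrank k (M →ₗ[R] V) := by
  rw [← (LinearMap.lsum R (fun _ : Fin n => M) k (M := V)).finrank_eq, finrank_pi_fintype,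
    Fin.sum_const, smul_eq_mul]

lemma finrank_hom_free (n : ℕ) [Module.Finite k R] [Module.Finite k V] :
    finrank k ((Fin n → R) →ₗ[R] V) = n * finrank k V := by
  rw [finrank_hom_pi, (LinearMap.ringLmapEquivSelf R k V).finrank_eq]

/- A simple quotient of `N` is also a quotient of `M`; both split off, and the hypothesis passes to
the complements. -/
theorem exists_surjective_of_isSemisimpleModule [Module.Finite k R]
    [Module.Finite k M] [Module.Finite k N] [IsSemisimpleModule R M] [IsSemisimpleModule R N]
    (h : ∀ m : Ideal R, m.IsMaximal →
      finrank k (N →ₗ[R] R ⧸ m) ≤ finrank k (M →ₗ[R] R ⧸ m)) :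
    ∃ φ : M →ₗ[R] N, Function.Surjective φ := by
  induction hd : finrank k N using Nat.strong_induction_on generalizing M N with
  | _ d ih =>
  subst hd
  cases subsingleton_or_nontrivial N
  · exact ⟨0, Function.surjective_to_subsingleton _⟩
  have : Module.Finite R N := .of_restrictScalars_finite k R N
  obtain ⟨m, hm, p, hp⟩ := exists_surjective_quotient_isMaximal (R := R) (M := N)
  have : IsSimpleModule R (R ⧸ m) := isSimpleModule_iff_isCoatom.mpr hm.out
  have : Nontrivial (R ⧸ m) := IsSimpleModule.nontrivial R _
  have : Nontrivial (N →ₗ[R] R ⧸ m) := nontrivial_hom_of_surjective hp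
  have : Nontrivial (M →ₗ[R] R ⧸ m) :=
    nontrivial_of_finrank_pos (R := k) (finrank_pos.trans_le (h m hm))
  obtain ⟨g, hg0⟩ := exists_ne (0 : M →ₗ[R] R ⧸ m)
  obtain ⟨eN⟩ := nonempty_equiv_ker_prod hp
  obtain ⟨eM⟩ := nonempty_equiv_ker_prod (LinearMap.surjective_of_ne_zero hg0)
  have hlt : finrank k (LinearMap.ker p) < finrank k N := by
    rw [(eN.restrictScalars k).finrank_eq, finrank_prod]
    exact Nat.lt_add_of_pos_right finrank_pos
  obtain ⟨φ, hφ⟩ := ih _ hlt (M := LinearMap.ker g) (N := LinearMap.ker p) (fun m' hm' => by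
    have hle := h m' hm'
    rw [finrank_hom_congr_left eN, finrank_hom_congr_left eM, finrank_hom_prod,
      finrank_hom_prod] at hle
    exact Nat.le_of_add_le_add_right hle) rfl
  exact ⟨eN.symm.toLinearMap ∘ₗ φ.prodMap LinearMap.id ∘ₗ eM.toLinearMap,
    eN.symm.surjective.comp ((hφ.prodMap Function.surjective_id).comp eM.surjective)⟩

/- Compare the semisimple quotients of `M` and `N` by their radicals, lift, and apply Nakayama. -/
theorem exists_surjective_of_projective [Module.Finite k R]
    [Module.Finite k M] [Module.Finite k N] [Projective R M]
    (h : ∀ m : Ideal R, m.IsMaximal →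
      finrank k (N →ₗ[R] R ⧸ m) ≤ finrank k (M →ₗ[R] R ⧸ m)) :
    ∃ φ : M →ₗ[R] N, Function.Surjective φ := by
  have : Module.Finite R N := .of_restrictScalars_finite k R N
  have : IsArtinian R M := isArtinian_of_tower k inferInstance
  have : IsArtinian R N := isArtinian_of_tower k inferInstance
  have : IsSemisimpleModule R (M ⧸ jacobson R M) :=
    IsArtinian.isSemisimpleModule_iff_jacobson R _ |>.mpr (jacobson_quotient_jacobson R M)
  have : IsSemisimpleModule R (N ⧸ jacobson R N) :=
    IsArtinian.isSemisimpleModule_iff_jacobson R _ |>.mpr (jacobson_quotient_jacobson R N)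
  obtain ⟨φ, hφ⟩ := exists_surjective_of_isSemisimpleModule (k := k) (R := R)
    (M := M ⧸ jacobson R M) (N := N ⧸ jacobson R N) fun m hm => by
      have : IsSimpleModule R (R ⧸ m) := isSimpleModule_iff_isCoatom.mpr hm.out
      simpa only [finrank_hom_quotient_jacobson] using h m hm
  obtain ⟨ψ, hψ⟩ := projective_lifting_property (jacobson R N).mkQ (φ ∘ₗ (jacobson R M).mkQ)
    (Submodule.mkQ_surjective _)
  refine ⟨ψ, surjective_of_surjective_mkQ_jacobson_comp ?_⟩
  rw [hψ]
  exact hφ.comp (Submodule.mkQ_surjective _)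

variable (k R M) in
lemma exists_isMaximal_forall_finrank_hom_mul_le [Module.Finite k R] [Nontrivial R]
    [Module.Finite k M] :
    ∃ m : Ideal R, m.IsMaximal ∧ ∀ m' : Ideal R, m'.IsMaximal →
      finrank k (R ⧸ m) * finrank k (M →ₗ[R] R ⧸ m') ≤
        finrank k (M →ₗ[R] R ⧸ m) * finrank k (R ⧸ m') := by
  let ratio : Ideal R → ℚ := fun m => finrank k (M →ₗ[R] R ⧸ m) / finrank k (R ⧸ m)
  have hpos (m : Ideal R) (hm : m.IsMaximal) : (0 : ℚ) < finrank k (R ⧸ m) := by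
    have : Nontrivial (R ⧸ m) := Submodule.Quotient.nontrivial_iff.mpr hm.ne_top
    exact_mod_cast finrank_pos
  have hle (m : Ideal R) : finrank k (R ⧸ m) ≤ finrank k R :=
    LinearMap.finrank_le_finrank_of_surjective (f := m.mkQ.restrictScalars k) m.mkQ_surjective
  -- Numerator and denominator are bounded, so the ratio takes finitely many values.
  have hfin : (ratio '' {m | m.IsMaximal}).Finite := by
    refine (Set.Finite.image2 (fun a b : ℕ => (a / b : ℚ))
      (Set.finite_Iic (finrank k M * finrank k R)) (Set.finite_Iic (finrank k R))).subset ?_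
    rintro _ ⟨m, -, rfl⟩
    exact ⟨_, finrank_hom_le_finrank_mul_finrank.trans (Nat.mul_le_mul_left _ (hle m)), _, hle m,
      rfl⟩
  obtain ⟨m₀, hm₀⟩ := Ideal.exists_maximal R
  obtain ⟨m, hm, hmax⟩ := Set.exists_max_image _ id hfin ⟨_, m₀, hm₀, rfl⟩
  obtain ⟨m, hm, rfl⟩ := hm
  refine ⟨m, hm, fun m' hm' => ?_⟩
  have hratio : ratio m' ≤ ratio m := hmax _ ⟨m', hm', rfl⟩
  rw [div_le_div_iff₀ (hpos m' hm') (hpos m hm), mul_comm] at hratio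
  exact_mod_cast hratio

/- Restriction along `π` identifies `Hom(N, W)` with `Hom(Rᵗ, W)` by dimensions, so that all maps
`Rᵗ → W` vanish on `ker π`. -/
lemma injective_of_surjective_of_faithfulSMul [Module.Finite k R] [Module.Finite k N]
    [Module.Finite k V] [FaithfulSMul R V] {t : ℕ} {π : (Fin t → R) →ₗ[R] N}
    (hπ : Function.Surjective π) (h : t * finrank k V ≤ finrank k (N →ₗ[R] V)) :
    Function.Injective π := by
  have hinj : Function.Injective (LinearMap.lcomp k V π) :=
    fun _ _ h => (LinearMap.cancel_right hπ).mp h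
  have hdim : finrank k (N →ₗ[R] V) = finrank k ((Fin t → R) →ₗ[R] V) :=
    le_antisymm (LinearMap.finrank_le_finrank_of_injective hinj) (by rwa [finrank_hom_free])
  have hsurj := (LinearMap.injective_iff_surjective_of_finrank_eq_finrank hdim).mp hinj
  refine (injective_iff_map_eq_zero π).mpr fun u hu => funext fun i =>
    FaithfulSMul.eq_of_smul_eq_smul (α := V) fun v => ?_
  obtain ⟨ψ, hψ⟩ := hsurj (LinearMap.toSpanSingleton R V v ∘ₗ LinearMap.proj i)
  simpa [hu] using (LinearMap.congr_fun hψ u).symm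

/- For `m` maximizing `dim Hom(M, R ⧸ m) / dim (R ⧸ m)`, with numerator `t` and denominator `n`,
there is a surjection `Rᵗ → Mⁿ`; testing it against `W m` shows that it is injective. -/
theorem exists_pi_equiv_pi_of_faithfulSMul [Module.Finite k R] [Nontrivial R] [Module.Finite k M]
    (W : Ideal R → Type*) [∀ m, AddCommGroup (W m)] [∀ m, Module k (W m)] [∀ m, Module R (W m)]
    [∀ m, IsScalarTower k R (W m)] [∀ m, Module.Finite k (W m)]
    (hfaithful : ∀ m : Ideal R, m.IsMaximal → FaithfulSMul R (W m))
    (hdim : ∀ m : Ideal R, m.IsMaximal →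
      finrank k (M →ₗ[R] R ⧸ m) * finrank k (W m) ≤ finrank k (R ⧸ m) * finrank k (M →ₗ[R] W m)) :
    ∃ n t : ℕ, n ≠ 0 ∧ Nonempty ((Fin n → M) ≃ₗ[R] (Fin t → R)) := by
  obtain ⟨m, hm, hmax⟩ := exists_isMaximal_forall_finrank_hom_mul_le k R M
  have : Nontrivial (R ⧸ m) := Submodule.Quotient.nontrivial_iff.mpr hm.ne_top
  obtain ⟨π, hπ⟩ := exists_surjective_of_projective (k := k) (R := R)
    (M := Fin (finrank k (M →ₗ[R] R ⧸ m)) → R) (N := Fin (finrank k (R ⧸ m)) → M) fun m' hm' => by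
      rw [finrank_hom_pi, finrank_hom_free]
      exact hmax m' hm'
  have := hfaithful m hm
  have hinj : Function.Injective π :=
    injective_of_surjective_of_faithfulSMul (k := k) (V := W m) hπ
      (by rw [finrank_hom_pi]; exact hdim m hm)
  exact ⟨_, _, finrank_pos.ne', ⟨(LinearEquiv.ofBijective π ⟨hinj, hπ⟩).symm⟩⟩

/- With `k` an `R`-module through `ε`, comparing maps to `k` gives `n * dim Hom(M, k) = t`. -/
theorem finrank_dvd_finrank_of_pi_equiv_pi [Module.Finite k R] [Module.Finite k M]
    (ε : R →ₐ[k] k) {n t : ℕ} (hn : n ≠ 0) (e : (Fin n → M) ≃ₗ[R] (Fin t → R)) :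
    finrank k R ∣ finrank k M := by
  let : Module R k := Module.compHom k ε.toRingHom
  have : IsScalarTower k R k := ⟨fun c r x => by
    change ε (c • r) * x = c * (ε r * x)
    rw [map_smul, smul_eq_mul, mul_assoc]⟩
  have ht : n * finrank k (M →ₗ[R] k) = t := by
    rw [← finrank_hom_pi, finrank_hom_congr_left e, finrank_hom_free, finrank_self, mul_one]
  have hdim : n * finrank k M = t * finrank k R := by
    simpa only [finrank_pi_fintype, Fin.sum_const, smul_eq_mul] using
      (e.restrictScalars k).finrank_eq
  rw [← ht, mul_assoc] at hdim
  exact Dvd.intro_left _ (Nat.eq_of_mul_eq_mul_left (Nat.pos_of_ne_zero hn) hdim).symm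

end ModuleTheory

/-! ### Convolution and twisted modules -/

section Convolution

open Coalgebra TensorProduct WithConv

section Pairing

variable {k C L M N P Q S : Type*} [CommSemiring k] [AddCommMonoid C] [Module k C]
  [AddCommMonoid M] [Module k M] [AddCommMonoid N] [Module k N] [AddCommMonoid P] [Module k P]
  [AddCommMonoid L] [Module k L] [AddCommMonoid Q] [Module k Q] [AddCommMonoid S] [Module k S]

/-- The convolution `c ↦ ∑ β (u c₁) (v c₂)` of linear maps `u : C → M` and `v : C → N` along a
bilinear map `β : M × N → P`. -/
noncomputable def convPairing [CoalgebraStruct k C] (β : M →ₗ[k] N →ₗ[k] P) :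
    (C →ₗ[k] M) →ₗ[k] (C →ₗ[k] N) →ₗ[k] C →ₗ[k] P :=
  (TensorProduct.mapBilinear (.id k) C C M N).compr₂ (LinearMap.lcomp k P comul ∘ₗ
    LinearMap.llcomp k (C ⊗[k] C) (M ⊗[k] N) P (TensorProduct.lift β))

lemma convPairing_apply [CoalgebraStruct k C] (β : M →ₗ[k] N →ₗ[k] P) (u : C →ₗ[k] M)
    (v : C →ₗ[k] N) {ι : Type*} {c : C} (𝓡 : Repr k c ι) :
    convPairing β u v c = ∑ i ∈ 𝓡.index, β (u (𝓡.left i)) (v (𝓡.right i)) := by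
  simp [convPairing, ← 𝓡.eq]

variable [Coalgebra k C]

lemma sum_coassoc_apply (T : C →ₗ[k] C →ₗ[k] C →ₗ[k] P) (c : C) :
    ∑ i ∈ (ℛ k c).index, ∑ j ∈ (ℛ k ((ℛ k c).left i)).index,
      T ((ℛ k ((ℛ k c).left i)).left j) ((ℛ k ((ℛ k c).left i)).right j) ((ℛ k c).right i) =
    ∑ i ∈ (ℛ k c).index, ∑ j ∈ (ℛ k ((ℛ k c).right i)).index,
      T ((ℛ k c).left i) ((ℛ k ((ℛ k c).right i)).left j) ((ℛ k ((ℛ k c).right i)).right j) := by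
  have h := congrArg
    (TensorProduct.lift ((TensorProduct.lift.equiv (.id k) C C P).toLinearMap ∘ₗ T))
    (sum_tmul_tmul_eq (ℛ k c) (fun i => ℛ k ((ℛ k c).left i)) (fun i => ℛ k ((ℛ k c).right i)))
  simpa using h

lemma convPairing_assoc {β₁ : P →ₗ[k] N →ₗ[k] Q} {β₂ : L →ₗ[k] M →ₗ[k] P}
    {β₃ : L →ₗ[k] S →ₗ[k] Q} {β₄ : M →ₗ[k] N →ₗ[k] S}
    (h : ∀ x y z, β₁ (β₂ x y) z = β₃ x (β₄ y z))
    (u : C →ₗ[k] L) (v : C →ₗ[k] M) (w : C →ₗ[k] N) :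
    convPairing β₁ (convPairing β₂ u v) w = convPairing β₃ u (convPairing β₄ v w) := by
  ext c
  let T : C →ₗ[k] C →ₗ[k] C →ₗ[k] Q :=
    (β₂.compl₁₂ u v).compr₂ (LinearMap.lcomp k Q w ∘ₗ β₁)
  calc convPairing β₁ (convPairing β₂ u v) w c
      = ∑ i ∈ (ℛ k c).index, ∑ j ∈ (ℛ k ((ℛ k c).left i)).index,
          T ((ℛ k ((ℛ k c).left i)).left j) ((ℛ k ((ℛ k c).left i)).right j)
            ((ℛ k c).right i) := by
        simp [convPairing_apply _ _ _ (ℛ k _), T]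
    _ = _ := sum_coassoc_apply T c
    _ = convPairing β₃ u (convPairing β₄ v w) c := by
        simp [convPairing_apply _ _ _ (ℛ k _), T, h]

lemma convPairing_toSpanSingleton_comp_counit (β : M →ₗ[k] N →ₗ[k] P) (u : C →ₗ[k] M) (y : N) :
    convPairing β u (LinearMap.toSpanSingleton k N y ∘ₗ counit) = β.flip y ∘ₗ u := by
  ext c
  rw [convPairing_apply _ _ _ (ℛ k c)]
  have h := congrArg (TensorProduct.rid k C) (sum_tmul_counit_eq (ℛ k c))
  simp only [map_sum, TensorProduct.rid_tmul, one_smul] at h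
  conv_rhs => rw [← h]
  simp

lemma convPairing_toSpanSingleton_comp_counit_left (β : M →ₗ[k] N →ₗ[k] P) (x : M)
    (v : C →ₗ[k] N) :
    convPairing β (LinearMap.toSpanSingleton k M x ∘ₗ counit) v = β x ∘ₗ v := by
  ext c
  rw [convPairing_apply _ _ _ (ℛ k c)]
  conv_rhs => rw [← sum_counit_smul (ℛ k c)]
  simp

end Pairing

section Action

variable {k C R X : Type*} [CommSemiring k] [AddCommMonoid C] [Module k C] [Coalgebra k C]
  [Semiring R] [Algebra k R] [AddCommMonoid X] [Module k X]

/-- The action of the convolution algebra `Hom(C, R)` on `Hom(C, X)` by convolution along a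
representation `ρ` of `R` on `X`. -/
noncomputable def convAction (ρ : R →ₐ[k] Module.End k X) :
    WithConv (C →ₗ[k] R) →ₐ[k] Module.End k (C →ₗ[k] X) :=
  .ofLinearMap (convPairing ρ.toLinearMap ∘ₗ (WithConv.linearEquiv k (C →ₗ[k] R)).toLinearMap)
    (LinearMap.ext fun w => by
      have hone : (1 : WithConv (C →ₗ[k] R)).ofConv =
          LinearMap.toSpanSingleton k R 1 ∘ₗ counit := by
        ext; simp [Algebra.algebraMap_eq_smul_one]
      change convPairing ρ.toLinearMap (1 : WithConv (C →ₗ[k] R)).ofConv w = w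
      rw [hone, convPairing_toSpanSingleton_comp_counit_left]
      ext; simp)
    fun u v => LinearMap.ext fun w =>
      convPairing_assoc (β₂ := LinearMap.mul k R) (by simp) u.ofConv v.ofConv w

lemma convAction_apply (ρ : R →ₐ[k] Module.End k X) (u : WithConv (C →ₗ[k] R)) (w : C →ₗ[k] X) :
    convAction ρ u w = convPairing ρ.toLinearMap u.ofConv w := rfl

end Action

section Antipode

variable {k A X : Type*} [CommSemiring k] [Semiring A] [HopfAlgebra k A]
  [AddCommMonoid X] [Module k X]

lemma convAction_id_injective (ρ : A →ₐ[k] Module.End k X) :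
    Function.Injective (convAction ρ (toConv (LinearMap.id : A →ₗ[k] A))) :=
  Function.LeftInverse.injective (g := convAction ρ (toConv (HopfAlgebra.antipode k)))
    fun w => by
      rw [← Module.End.mul_apply, ← map_mul, LinearMap.antipode_mul_id, map_one,
        Module.End.one_apply]

end Antipode

section Twist

open Module

variable {k R C : Type*} [Field k] [Ring R] [Algebra k R] [AddCommGroup C] [Module k C]
  [Coalgebra k C]

/-- The twist of an `R`-module `V` by a measuring `τ` of `R` by a coalgebra `C`, that is, an algebra
homomorphism from `R` to the convolution algebra `Hom(C, R)`: the space `Hom(C, V)`, on which `R`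
acts by `(r • w) c = ∑ τ r c₁ • w c₂`. -/
def Twist (_τ : R →ₐ[k] WithConv (C →ₗ[k] R)) (V : Type*) [AddCommGroup V] [Module k V] : Type _ :=
  C →ₗ[k] V

namespace Twist

variable (τ : R →ₐ[k] WithConv (C →ₗ[k] R)) (V : Type*) [AddCommGroup V] [Module k V]

noncomputable instance : AddCommGroup (Twist τ V) := inferInstanceAs (AddCommGroup (C →ₗ[k] V))

noncomputable instance : Module k (Twist τ V) := inferInstanceAs (Module k (C →ₗ[k] V))

instance : FunLike (Twist τ V) C V := inferInstanceAs (FunLike (C →ₗ[k] V) C V)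

instance [Module.Finite k C] [Module.Finite k V] : Module.Finite k (Twist τ V) :=
  inferInstanceAs (Module.Finite k (C →ₗ[k] V))

lemma finrank_eq [Module.Finite k C] [Module.Finite k V] :
    finrank k (Twist τ V) = finrank k C * finrank k V :=
  finrank_linearMap k k C V

variable {V} [Module R V] [IsScalarTower k R V]

noncomputable instance : Module R (Twist τ V) :=
  Module.compHom (C →ₗ[k] V) ((convAction (Algebra.lsmul k k V)).comp τ).toRingHom

variable {τ}

lemma smul_apply (r : R) (w : Twist τ V) {ι : Type*} {c : C} (𝓡 : Repr k c ι) :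
    (r • w) c = ∑ i ∈ 𝓡.index, τ r (𝓡.left i) • w (𝓡.right i) :=
  convPairing_apply _ _ _ 𝓡

lemma apply_smul_eq_zero {r : R} (hr : ∀ w : Twist τ V, r • w = 0) (c : C) (v : V) :
    τ r c • v = 0 := by
  have h := convPairing_toSpanSingleton_comp_counit (Algebra.lsmul k k V).toLinearMap (τ r).ofConv v
  exact congr($(h.symm.trans (hr _)) c)

instance : IsScalarTower k R (Twist τ V) where
  smul_assoc c r w := congr($(map_smul ((convAction (Algebra.lsmul k k V)).comp τ) c r) w)

end Twist

section TwistHom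

variable {τ : R →ₐ[k] WithConv (C →ₗ[k] R)} {M V : Type*}
  [AddCommGroup M] [Module k M] [Module R M] [IsScalarTower k R M]
  [AddCommGroup V] [Module k V] [Module R V] [IsScalarTower k R V]

variable (k R M V) in
/-- The evaluation pairing of `M` with `Hom_R(M, V)`. -/
def evalPairing : M →ₗ[k] (M →ₗ[R] V) →ₗ[k] V := (LinearMap.restrictScalarsₗ k R M V k).flip

/-- The map `Hom(C, Hom_R(M, V)) → Hom_R(M, Twist τ V)` sending a family `θ` to
`h ↦ (c ↦ ∑ θ c₂ (σ h c₁))`. -/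
noncomputable def twistHom (σ : M →ₗ[R] Twist τ M) :
    (C →ₗ[k] M →ₗ[R] V) →ₗ[k] M →ₗ[R] Twist τ V where
  toFun θ :=
    { toFun := fun h => convPairing (evalPairing k R M V) (σ h) θ
      map_add' := fun g h => by
        rw [map_add]
        exact LinearMap.map_add₂ (convPairing (evalPairing k R M V)) (σ g) (σ h) θ
      map_smul' := fun r h => by
        rw [map_smul]
        exact convPairing_assoc (fun x y z => map_smul z x y) (τ r).ofConv (σ h) θ }
  map_add' θ θ' := LinearMap.ext fun h => map_add (convPairing (evalPairing k R M V) (σ h)) θ θ'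
  map_smul' c θ := LinearMap.ext fun h => map_smul (convPairing (evalPairing k R M V) (σ h)) c θ

lemma twistHom_apply (σ : M →ₗ[R] Twist τ M) (θ : C →ₗ[k] M →ₗ[R] V) (h : M) {ι : Type*} {c : C}
    (𝓡 : Repr k c ι) : twistHom σ θ h c = ∑ i ∈ 𝓡.index, θ (𝓡.right i) (σ h (𝓡.left i)) :=
  convPairing_apply (evalPairing k R M V) (σ h) θ 𝓡

end TwistHom

section RightAction

/-- The representation `(x • ψ) h = ψ (h ◁ x)` of `A` on `Hom(M, V)` attached to a right action
`h ◁ x = σ h x` of `A` on `M`. -/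
noncomputable def precompRep {A M : Type*} (V : Type*) [Ring A] [Algebra k A]
    [AddCommGroup M] [Module k M] [AddCommGroup V] [Module k V] (σ : M →ₗ[k] A →ₗ[k] M)
    (hone : ∀ h, σ h 1 = h) (hmul : ∀ h x y, σ h (x * y) = σ (σ h x) y) :
    A →ₐ[k] Module.End k (M →ₗ[k] V) :=
  .ofLinearMap ((LinearMap.llcomp k M M V).flip ∘ₗ σ.flip) (by ext; simp [hone])
    (fun x y => by ext; simp [hmul])

variable {A M V : Type*} [Ring A] [HopfAlgebra k A] {τ : R →ₐ[k] WithConv (A →ₗ[k] R)}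
  [AddCommGroup M] [Module k M] [Module R M] [IsScalarTower k R M]
  [AddCommGroup V] [Module k V] [Module R V] [IsScalarTower k R V]
  {σ : M →ₗ[R] Twist τ M}

/- As a map `A → Hom(M, Twist τ V)`, the image of `θ` is the product of the identity of `A` and `θ`
for the action of `Hom(A, A)`, and the identity is inverted by the antipode. -/
theorem twistHom_injective (hone : ∀ h, σ h 1 = h) (hmul : ∀ h x y, σ h (x * y) = σ (σ h x) y) :
    Function.Injective (twistHom (V := V) σ) := by
  let ρ := precompRep V (σ.restrictScalars k : M →ₗ[k] A →ₗ[k] M) hone hmul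
  let ι := LinearMap.restrictScalarsₗ k R M V k
  have hconv (θ : A →ₗ[k] M →ₗ[R] V) (a : A) (h : M) :
      convAction ρ (toConv LinearMap.id) (ι ∘ₗ θ) a h = twistHom σ θ h a := by
    rw [twistHom_apply _ _ _ (ℛ k a), convAction_apply, convPairing_apply _ _ _ (ℛ k a),
      LinearMap.sum_apply]
    rfl
  intro θ θ' hθ
  refine (LinearMap.cancel_left (LinearMap.restrictScalars_injective k)).mp
    (convAction_id_injective ρ (?_ : _ = convAction ρ _ (ι ∘ₗ θ')))
  ext a h
  rw [hconv, hconv, hθ]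

theorem finrank_mul_finrank_hom_le [Module.Finite k A] [Module.Finite k M] [Module.Finite k V]
    (hone : ∀ h, σ h 1 = h) (hmul : ∀ h x y, σ h (x * y) = σ (σ h x) y) :
    finrank k A * finrank k (M →ₗ[R] V) ≤ finrank k (M →ₗ[R] Twist τ V) :=
  (finrank_linearMap k k A (M →ₗ[R] V)).ge.trans
    (LinearMap.finrank_le_finrank_of_injective (twistHom_injective (V := V) hone hmul))

theorem finrank_dvd_finrank_of_faithfulSMul_twist [Module.Finite k A] [Module.Finite k R]
    [Module.Finite k M] (σ : M →ₗ[R] Twist τ M) (hone : ∀ h, σ h 1 = h)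
    (hmul : ∀ h x y, σ h (x * y) = σ (σ h x) y)
    (hfaithful : ∀ m : Ideal R, m.IsMaximal → FaithfulSMul R (Twist τ (R ⧸ m))) (ε : R →ₐ[k] k) :
    finrank k R ∣ finrank k M := by
  have : Nontrivial R := ε.toRingHom.domain_nontrivial
  have hdim (m : Ideal R) : finrank k (M →ₗ[R] R ⧸ m) * finrank k (Twist τ (R ⧸ m)) ≤
      finrank k (R ⧸ m) * finrank k (M →ₗ[R] Twist τ (R ⧸ m)) := by
    rw [Twist.finrank_eq, ← mul_assoc, mul_comm, mul_comm (finrank k (M →ₗ[R] R ⧸ m))]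
    exact Nat.mul_le_mul_left _ (finrank_mul_finrank_hom_le hone hmul)
  obtain ⟨n, t, hn, ⟨e⟩⟩ := exists_pi_equiv_pi_of_faithfulSMul (k := k)
    (fun m : Ideal R => Twist τ (R ⧸ m)) hfaithful fun m _ => hdim m
  exact finrank_dvd_finrank_of_pi_equiv_pi ε hn e

end RightAction

end Twist

/-! ### The dual of a Hopf algebra -/

section Dual

open Module

section Finite

variable {k A X : Type*} [Field k] [AddCommGroup A] [Module k A] [FiniteDimensional k A]
  [AddCommGroup X] [Module k X] [FiniteDimensional k X]

instance finite_withConv : FiniteDimensional k (WithConv (A →ₗ[k] X)) :=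
  .equiv (WithConv.linearEquiv k (A →ₗ[k] X)).symm

end Finite

lemma finrank_dual (k A : Type*) [Field k] [AddCommGroup A] [Module k A] :
    finrank k (WithConv (A →ₗ[k] k)) = finrank k A :=
  (WithConv.linearEquiv k (A →ₗ[k] k)).finrank_eq.trans Subspace.dual_finrank_eq

section Precomp

variable {k A B : Type*} [CommSemiring k] [AddCommMonoid A] [Module k A] [Coalgebra k A]
  [AddCommMonoid B] [Module k B] [Coalgebra k B]

/-- The homomorphism of convolution algebras `Hom(B, X) → Hom(A, X)` induced by a coalgebra
homomorphism `A → B`. -/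
noncomputable def convPrecomp (f : A →ₗc[k] B) (X : Type*) [Semiring X] [Algebra k X] :
    WithConv (B →ₗ[k] X) →ₐ[k] WithConv (A →ₗ[k] X) :=
  .ofLinearMap
    ((WithConv.linearEquiv k (A →ₗ[k] X)).symm.toLinearMap ∘ₗ LinearMap.lcomp k X f.toLinearMap ∘ₗ
      (WithConv.linearEquiv k (B →ₗ[k] X)).toLinearMap)
    (by ext; simp)
    (fun r s => congrArg toConv (LinearMap.convMul_comp_coalgHom_distrib r s f))

lemma convPrecomp_injective {f : A →ₗc[k] B} (hf : Function.Surjective f) (X : Type*) [Semiring X]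
    [Algebra k X] : Function.Injective (convPrecomp f X) := fun r s h => by
  ext b
  obtain ⟨a, rfl⟩ := hf b
  exact congr($h a)

end Precomp

section Quotient

variable {k A B : Type*} [Field k] [Ring A] [HopfAlgebra k A] [Ring B] [Bialgebra k B]

lemma isUnit_toConv_id_of_surjective [Module.Finite k B] (f : A →ₐc[k] B)
    (hf : Function.Surjective f) : IsUnit (toConv (LinearMap.id : B →ₗ[k] B)) := by
  let F : WithConv (A →ₗ[k] B) := toConv (f : A →ₗc[k] B).toLinearMap
  let G : WithConv (A →ₗ[k] B) :=
    toConv ((f : A →ₗc[k] B).toLinearMap ∘ₗ HopfAlgebra.antipode k)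
  have hFG : F * G = 1 := by
    have h := LinearMap.algHom_comp_convMul_distrib (f : A →ₐ[k] B) (toConv LinearMap.id)
      (toConv (HopfAlgebra.antipode k))
    rw [LinearMap.id_mul_antipode] at h
    ext a
    exact congr($h.symm a).trans (AlgHom.commutes (f : A →ₐ[k] B) _)
  have : IsArtinianRing (WithConv (B →ₗ[k] B)) := isArtinian_of_tower k inferInstance
  refine IsArtinianRing.isUnit_iff_isRightRegular.mpr fun r s hrs =>
    convPrecomp_injective (f := (f : A →ₗc[k] B)) hf B ?_
  have hF : convPrecomp (f : A →ₗc[k] B) B (toConv LinearMap.id) = F := rfl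
  have h := congrArg (convPrecomp (f : A →ₗc[k] B) B) hrs
  simp only [map_mul, hF] at h
  simpa only [mul_assoc, hFG, mul_one] using congrArg (· * G) h

/-- The Hopf algebra structure on a finite-dimensional bialgebra that is a quotient of a Hopf
algebra. The antipode is the convolution inverse of the identity. -/
noncomputable abbrev hopfAlgebraOfSurjective [Module.Finite k B] (f : A →ₐc[k] B)
    (hf : Function.Surjective f) : HopfAlgebra k B :=
  .ofConvInverse (↑(isUnit_toConv_id_of_surjective f hf).unit⁻¹ : WithConv (B →ₗ[k] B)).ofConv
    (isUnit_toConv_id_of_surjective f hf).val_inv_mul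
    (isUnit_toConv_id_of_surjective f hf).mul_val_inv

end Quotient

section Translation

variable (k A : Type*) [CommSemiring k] [Semiring A] [Bialgebra k A]

/-- The measuring of the dual algebra of `A` by `A` through translations, sending a functional `r`
to `a ↦ (x ↦ r (a * x))`. -/
noncomputable def translation :
    WithConv (A →ₗ[k] k) →ₐ[k] WithConv (A →ₗ[k] WithConv (A →ₗ[k] k)) :=
  .ofLinearMap
    ((WithConv.linearEquiv k _).symm.toLinearMap ∘ₗ LinearMap.mk₂ k
      (fun r a => toConv (r.ofConv ∘ₗ LinearMap.mulLeft k a))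
      (fun r s a => by ext; simp) (fun c r a => by ext; simp)
      (fun r a b => by ext; simp [add_mul]) (fun c r a => by ext; simp))
    (by ext; simp)
    (fun r s => by
      ext a x
      rw [(ℛ k a).convMul_apply]
      simp [(ℛ k x).convMul_apply, ← (ℛ k a).eq, ← (ℛ k x).eq, Finset.sum_mul_sum])

variable {k A}

lemma translation_apply (r : WithConv (A →ₗ[k] k)) (a x : A) :
    translation k A r a x = r (a * x) := rfl

end Translation

/-- Evaluation at `1`, the counit of the dual of `B`. -/
noncomputable def evalOne (k B : Type*) [CommSemiring k] [Semiring B] [Bialgebra k B] :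
    WithConv (B →ₗ[k] k) →ₐ[k] k :=
  .ofLinearMap (LinearMap.applyₗ 1 ∘ₗ (WithConv.linearEquiv k (B →ₗ[k] k)).toLinearMap)
    (by simp) (fun r s => by simp [LinearMap.convMul_apply, Algebra.TensorProduct.one_def])

/-- The measuring of the dual algebra of `B` by `A` through translations by the elements `f a`. -/
noncomputable def measuring {k A B : Type*} [CommSemiring k] [AddCommMonoid A] [Module k A]
    [Coalgebra k A] [Semiring B] [Bialgebra k B] (f : A →ₗc[k] B) :
    WithConv (B →ₗ[k] k) →ₐ[k] WithConv (A →ₗ[k] WithConv (B →ₗ[k] k)) :=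
  (convPrecomp f _).comp (translation k B)

section Faithful

variable {k A B V : Type*} [Field k] [AddCommGroup A] [Module k A] [Coalgebra k A] [Ring B]
  [HopfAlgebra k B] [FiniteDimensional k B]

/- The formula for `r x • 1`, evaluated at `z`, says `ε(z) r(x) = ∑ r(x S(z₁) z₂)`. -/
lemma smul_one_mem_of_translation_mem {I : Ideal (WithConv (B →ₗ[k] k))} {r : WithConv (B →ₗ[k] k)}
    (hr : ∀ b, translation k B r b ∈ I) (x : B) : r x • (1 : WithConv (B →ₗ[k] k)) ∈ I := by
  let e := finBasis k B
  have key : r x • (1 : WithConv (B →ₗ[k] k)) =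
      ∑ i, toConv (e.coord i ∘ₗ HopfAlgebra.antipode k) * translation k B r (x * e i) := by
    ext z
    calc r x * counit z
        = r (x * ∑ j ∈ (ℛ k z).index,
          HopfAlgebra.antipode k ((ℛ k z).left j) * (ℛ k z).right j) := by
          rw [HopfAlgebra.sum_antipode_mul_eq_smul]
          simp [mul_comm]
      _ = ∑ j ∈ (ℛ k z).index, ∑ i, e.repr (HopfAlgebra.antipode k ((ℛ k z).left j)) i *
            r (x * e i * (ℛ k z).right j) := by
          rw [Finset.mul_sum, map_sum]
          refine Finset.sum_congr rfl fun j _ => ?_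
          conv_lhs => rw [← e.sum_repr (HopfAlgebra.antipode k ((ℛ k z).left j))]
          simp only [Finset.sum_mul, Finset.mul_sum, map_sum, smul_mul_assoc, mul_smul_comm,
            map_smul, smul_eq_mul, mul_assoc]
      _ = _ := by
        rw [Finset.sum_comm]
        simp [(ℛ k z).convMul_apply, translation_apply]
  rw [key]
  exact I.sum_mem fun i _ => I.mul_mem_left _ (hr _)

/- If `r` annihilates the twist, then all translates of `r` annihilate every vector of `V`. -/
theorem faithfulSMul_twist_measuring [AddCommGroup V] [Module k V] [Module (WithConv (B →ₗ[k] k)) V]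
    [IsScalarTower k (WithConv (B →ₗ[k] k)) V] [Nontrivial V] {f : A →ₗc[k] B}
    (hf : Function.Surjective f) : FaithfulSMul (WithConv (B →ₗ[k] k)) (Twist (measuring f) V) where
  eq_of_smul_eq_smul {r s} hrs := by
    obtain ⟨v, hv⟩ := exists_ne (0 : V)
    let I : Ideal (WithConv (B →ₗ[k] k)) :=
      LinearMap.ker (LinearMap.toSpanSingleton (WithConv (B →ₗ[k] k)) V v)
    have hmem (b : B) : translation k B (r - s) b ∈ I := by
      obtain ⟨a, rfl⟩ := hf b
      exact Twist.apply_smul_eq_zero (τ := measuring f)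
        (fun w => by rw [sub_smul, hrs, sub_self]) a v
    rw [← sub_eq_zero]
    ext x
    have h : ((r - s) x • (1 : WithConv (B →ₗ[k] k))) • v = 0 :=
      smul_one_mem_of_translation_mem hmem x
    rw [smul_assoc, one_smul] at h
    exact (smul_eq_zero_iff_left hv).mp h

end Faithful

section DualModule

variable {k A B : Type*} [Field k]

/-- The dual of `A`, as a module over the dual algebra of `B` along a coalgebra homomorphism
`A → B`. -/
def DualModule [AddCommGroup A] [Module k A] [Coalgebra k A] [AddCommGroup B] [Module k B]
    [Coalgebra k B] (_f : A →ₗc[k] B) : Type _ :=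
  WithConv (A →ₗ[k] k)

namespace DualModule

section Coalgebra

variable [AddCommGroup A] [Module k A] [Coalgebra k A] [AddCommGroup B] [Module k B]
  [Coalgebra k B] (f : A →ₗc[k] B)

noncomputable instance : AddCommGroup (DualModule f) :=
  inferInstanceAs (AddCommGroup (WithConv (A →ₗ[k] k)))

noncomputable instance : Module k (DualModule f) :=
  inferInstanceAs (Module k (WithConv (A →ₗ[k] k)))

noncomputable instance : Module (WithConv (B →ₗ[k] k)) (DualModule f) :=
  Module.compHom (WithConv (A →ₗ[k] k)) (convPrecomp f k).toRingHom

instance : IsScalarTower k (WithConv (B →ₗ[k] k)) (DualModule f) where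
  smul_assoc c r h := by
    let h' : WithConv (A →ₗ[k] k) := h
    change convPrecomp f k (c • r) * h' = c • (convPrecomp f k r * h')
    rw [map_smul, smul_mul_assoc]

instance [FiniteDimensional k A] : Module.Finite k (DualModule f) :=
  inferInstanceAs (Module.Finite k (WithConv (A →ₗ[k] k)))

lemma finrank_eq : finrank k (DualModule f) = finrank k A :=
  finrank_dual k A

end Coalgebra

variable [Ring A] [Bialgebra k A] [Ring B] [Bialgebra k B]

/-- The translations of functionals on `A`, as a `B*`-linear map. -/
noncomputable def translationHom (f : A →ₐc[k] B) :
    DualModule (f : A →ₗc[k] B) →ₗ[WithConv (B →ₗ[k] k)]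
      Twist (measuring (f : A →ₗc[k] B)) (DualModule (f : A →ₗc[k] B)) where
  toFun h := (translation k A h).ofConv
  map_add' g h := congrArg ofConv (map_add (translation k A) g h)
  map_smul' r h := DFunLike.ext _ _ fun a => by
    have hcompat (x : A) : translation k A (convPrecomp (f : A →ₗc[k] B) k r) x =
        convPrecomp (f : A →ₗc[k] B) k (measuring (f : A →ₗc[k] B) r x) := by
      ext y
      exact congrArg r (map_mul f x y)
    let h' : WithConv (A →ₗ[k] k) := h
    have hmul : translation k A (convPrecomp (f : A →ₗc[k] B) k r * h') a =
        ∑ i ∈ (ℛ k a).index, convPrecomp (f : A →ₗc[k] B) k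
          (measuring (f : A →ₗc[k] B) r ((ℛ k a).left i)) *
          translation k A h' ((ℛ k a).right i) := by
      rw [map_mul, (ℛ k a).convMul_apply]
      simp only [hcompat]
    exact hmul.trans (Twist.smul_apply r (show Twist (measuring (f : A →ₗc[k] B))
      (DualModule (f : A →ₗc[k] B)) from (translation k A h').ofConv) (ℛ k a)).symm

lemma translationHom_apply_one (f : A →ₐc[k] B) (h : DualModule (f : A →ₗc[k] B)) :
    translationHom f h 1 = h :=
  WithConv.ext (LinearMap.ext fun x => congrArg (show WithConv (A →ₗ[k] k) from h) (one_mul x))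

lemma translationHom_apply_mul (f : A →ₐc[k] B) (h : DualModule (f : A →ₗc[k] B)) (x y : A) :
    translationHom f h (x * y) = translationHom f (translationHom f h x) y :=
  WithConv.ext (LinearMap.ext fun z => congrArg (show WithConv (A →ₗ[k] k) from h)
    (mul_assoc x y z))

end DualModule

end DualModule

end Dual

end Convolution

theorem nichols_zoeller_quotient_general {k A B : Type*} [Field k] [Ring A] [Ring B]
    [HopfAlgebra k A] [Bialgebra k B] [FiniteDimensional k A] (f : A →ₐc[k] B)
    (hf : Function.Surjective f) : Module.finrank k B ∣ Module.finrank k A := by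
  have : FiniteDimensional k B := .of_surjective (f : A →ₗc[k] B).toLinearMap hf
  have h := finrank_dvd_finrank_of_faithfulSMul_twist (DualModule.translationHom f)
    (DualModule.translationHom_apply_one f) (DualModule.translationHom_apply_mul f)
    (fun m hm => by
      let := hopfAlgebraOfSurjective f hf
      have := Submodule.Quotient.nontrivial_iff.mpr hm.ne_top
      exact faithfulSMul_twist_measuring hf) (evalOne k B)
  rwa [finrank_dual, DualModule.finrank_eq] at h

/-- (Nichols–Zoeller divisibility for Hopf quotients) If `A` and `B` are
finite-dimensional Hopf algebras over a field `k` and `f : A → B` is a surjective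
bialgebra homomorphism (so `B` is the quotient of `A` by a Hopf ideal), then
`dim_k B` divides `dim_k A`. -/
theorem nichols_zoeller_quotient (k A B : Type) [Field k] [Ring A] [Ring B]
    [HopfAlgebra k A] [HopfAlgebra k B] [FiniteDimensional k A] [FiniteDimensional k B]
    (f : A →ₐc[k] B) (hf : Function.Surjective f) :
    Module.finrank k B ∣ Module.finrank k A :=
  nichols_zoeller_quotient_general f hf
end
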